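/- There exists ε_* > 0 such that for every ε ∈ (0, ε_*] and every normalised self-similar profile φ_ε for K_ε, the function x ↦ x^{−2} ∫₀^x ∫_{x−y}^∞ y K_ε(y,z) φ_ε(y) φ_ε(z) dz dy (which coincides with φ_ε almost everywhere) is differentiable at every point of (0,∞); i.e. each self-similar profile has a representative which is differentiable on (0,∞). -/

import Mathlib

open MeasureTheory Real Set Filter

noncomputable def weight (a b x : ℝ) : ℝ := if x ≤ 1 then x ^ a else x ^ b

noncomputable def Xnorm (a b : ℝ) (g : ℝ → ℝ) : ℝ :=
  ∫ x in Ioi (0:ℝ), |g x| * weight a b x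

def MemX (a b : ℝ) (g : ℝ → ℝ) : Prop :=
  IntegrableOn (fun x => g x * weight a b x) (Ioi 0)

noncomputable def Kern (ε : ℝ) (W : ℝ → ℝ → ℝ) (x y : ℝ) : ℝ := 2 + ε * W x y

def GoodW (α : ℝ) (W : ℝ → ℝ → ℝ) : Prop :=
  ContinuousOn (fun p : ℝ × ℝ => W p.1 p.2) (Ioi 0 ×ˢ Ioi 0) ∧
  (∀ x y : ℝ, 0 < x → 0 < y → W x y = W y x) ∧
  (∀ l x y : ℝ, 0 < l → 0 < x → 0 < y → W (l * x) (l * y) = W x y) ∧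
  (∀ x y : ℝ, 0 < x → 0 < y → 0 ≤ W x y ∧ W x y ≤ (x / y) ^ α + (y / x) ^ α)

def IsProfile (K : ℝ → ℝ → ℝ) (φ : ℝ → ℝ) : Prop :=
  LocallyIntegrableOn φ (Ioi 0) ∧
  (∀ᵐ x ∂(volume.restrict (Ioi (0:ℝ))), 0 ≤ φ x) ∧
  IntegrableOn (fun x => x * φ x) (Ioi 0) ∧
  (∀ᵐ x ∂(volume.restrict (Ioi (0:ℝ))),
    x ^ 2 * φ x = ∫ y in Ioo 0 x, ∫ z in Ioi (x - y), y * K y z * φ y * φ z)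

def IsNormalised (φ : ℝ → ℝ) : Prop := ∫ x in Ioi (0:ℝ), x * φ x = 1

/-!
The crux is that, for small `ε`, a profile `ν = φ dx` has a finite moment of order `-α`.

The flux on the right-hand side of the profile equation is finite almost everywhere: an infinite
flux has vanishing Bochner integral, so it would force `φ = 0` near `0`. Testing the equation
against `F - x F'` then gives
`2 ∫ (F - x F') dν = ∫∫ K(y, z) (F(y) + F(z) - F(y + z)) dν dν`.
For `F(x) = 1 - exp (-p x)` this is an equation for the Laplace exponent
`Q(p) = ∫ (1 - exp (-p x)) dν`. The bound `2 ≤ K` turns it into `p Q' ≤ Q - Q²`, which forces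
`Q ≤ 1` and hence `ν(ℝ) ≤ 1`; the upper bound on `K` gives the reverse inequality up to `O(ε)`, so
that `2 Q(P) > 1 + α` for some `P` once `ε` is small. For `F(x) = x (x + η)^(-1-α)`, a
regularisation of `x^(-α)`, one has `0 ≤ F - x F' ≤ (1 + α) F` and, up to a multiple of `y + z`,
`F(y + z) ≤ exp (-P z) F(y) + exp (-P y) F(z)`, so the equation yields
`(2 Q(P) - 1 - α) ∫ F dν ≤ C` uniformly in `η`.

With this moment available the flux is mass lost minus mass gained, a difference of primitives of
a loss and a gain density. Therefore the flux, and with it the density of `ν`, is continuous on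
`(0, ∞)`; then the loss and gain densities are themselves continuous and the flux is differentiable.
-/

open scoped ENNReal Topology

namespace Coagulation

/-! ### Near-constant kernels -/

/-- A symmetric coagulation kernel on the open quadrant which exceeds the constant `2` by at most
`ε ((x/y)^α + (y/x)^α)`. The values of `K` outside the quadrant are irrelevant. -/
structure IsNearConstantKernel (α ε : ℝ) (K : ℝ → ℝ → ℝ) : Prop where
  continuousOn : ContinuousOn (fun p : ℝ × ℝ => K p.1 p.2) (Ioi 0 ×ˢ Ioi 0)
  symm : ∀ {x y : ℝ}, 0 < x → 0 < y → K x y = K y x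
  two_le : ∀ {x y : ℝ}, 0 < x → 0 < y → 2 ≤ K x y
  le : ∀ {x y : ℝ}, 0 < x → 0 < y → K x y ≤ 2 + ε * ((x / y) ^ α + (y / x) ^ α)

theorem isNearConstantKernel_kern {α ε ε' : ℝ} {W : ℝ → ℝ → ℝ} (hW : GoodW α W) (hε : 0 ≤ ε)
    (hε' : ε ≤ ε') : IsNearConstantKernel α ε' (Kern ε W) where
  continuousOn := continuousOn_const.add (continuousOn_const.mul hW.1)
  symm hx hy := by rw [Kern, Kern, hW.2.1 _ _ hx hy]
  two_le hx hy := le_add_of_nonneg_right (mul_nonneg hε (hW.2.2.2 _ _ hx hy).1)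
  le {x y} hx hy := by
    obtain ⟨hW0, hW1⟩ := hW.2.2.2 x y hx hy
    rw [Kern]
    gcongr
    exact hε.trans hε'

namespace IsNearConstantKernel

variable {α ε : ℝ} {K : ℝ → ℝ → ℝ}

theorem nonneg (hK : IsNearConstantKernel α ε K) {x y : ℝ} (hx : 0 < x) (hy : 0 < y) : 0 ≤ K x y :=
  zero_le_two.trans (hK.two_le hx hy)

theorem eps_nonneg (hK : IsNearConstantKernel α ε K) : 0 ≤ ε := by
  have h := (hK.two_le one_pos one_pos).trans (hK.le one_pos one_pos)
  norm_num at h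
  exact h

theorem continuousAt (hK : IsNearConstantKernel α ε K) {x y : ℝ} (hx : 0 < x) (hy : 0 < y) :
    ContinuousAt (fun p : ℝ × ℝ => K p.1 p.2) (x, y) :=
  hK.continuousOn.continuousAt (prod_mem_nhds (Ioi_mem_nhds hx) (Ioi_mem_nhds hy))

theorem exists_measurable (hK : IsNearConstantKernel α ε K) :
    ∃ k : ℝ → ℝ → ℝ, Measurable (fun p : ℝ × ℝ => k p.1 p.2) ∧ IsNearConstantKernel α ε k ∧
      ∀ x y : ℝ, 0 < x → 0 < y → k x y = K x y := by
  classical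
  set Q : Set (ℝ × ℝ) := Ioi 0 ×ˢ Ioi 0
  set k : ℝ → ℝ → ℝ := fun x y => Q.piecewise (fun p => K p.1 p.2) (fun _ => 2) (x, y)
  have hkK : ∀ {x y : ℝ}, 0 < x → 0 < y → k x y = K x y := fun {x y} hx hy =>
    piecewise_eq_of_mem Q _ _ (show (x, y) ∈ Q from ⟨hx, hy⟩)
  refine ⟨k, hK.continuousOn.measurable_piecewise continuousOn_const
    (measurableSet_Ioi.prod measurableSet_Ioi), ⟨?_, ?_, ?_, ?_⟩, fun _ _ => hkK⟩
  · exact hK.continuousOn.congr fun p hp => hkK hp.1 hp.2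
  · intro x y hx hy
    rw [hkK hx hy, hkK hy hx, hK.symm hx hy]
  · intro x y hx hy
    exact hkK hx hy ▸ hK.two_le hx hy
  · intro x y hx hy
    exact hkK hx hy ▸ hK.le hx hy

theorem exists_mul_le (hK : IsNearConstantKernel α ε K) (hα : α ∈ Ico (0 : ℝ) 1) (X : ℝ) :
    ∃ C, 0 ≤ C ∧ ∀ y ∈ Ioc 0 X, ∀ z, 0 < z → y * K y z ≤ C * (1 + z + z ^ (-α)) := by
  rcases le_or_gt X 0 with hX | hX
  · exact ⟨0, le_rfl, fun y hy => absurd (hy.1.trans_le hy.2) hX.not_gt⟩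
  have hε := hK.eps_nonneg
  refine ⟨2 * X + ε * (X ^ (1 + α) + X ^ (1 - α)), by positivity, fun y hy z hz => ?_⟩
  have hzα : z ^ α ≤ 1 + z := by
    have := rpow_one_add_le_one_add_mul_self (s := z - 1) (by linarith) hα.1 hα.2.le
    rw [add_sub_cancel] at this
    nlinarith [hα.1, hα.2]
  have hfirst : y * (y / z) ^ α ≤ X ^ (1 + α) * z ^ (-α) := by
    rw [div_rpow hy.1.le hz.le, rpow_neg hz.le, ← div_eq_mul_inv, ← mul_div_assoc,
      ← rpow_one_add' hy.1.le (by linarith [hα.1])]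
    gcongr <;> linarith [hα.1, hy.1, hy.2]
  have hsecond : y * (z / y) ^ α ≤ X ^ (1 - α) * (1 + z) := by
    calc y * (z / y) ^ α = y ^ (1 - α) * z ^ α := by
          rw [div_rpow hz.le hy.1.le, rpow_sub hy.1, rpow_one]
          ring
      _ ≤ X ^ (1 - α) * (1 + z) := by
          gcongr
          exacts [hy.1.le, by linarith [hα.2], hy.2]
  have : 0 ≤ z ^ (-α) := by positivity
  calc y * K y z ≤ y * (2 + ε * ((y / z) ^ α + (z / y) ^ α)) := by
        gcongr
        exacts [hy.1.le, hK.le hy.1 hz]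
    _ = 2 * y + ε * (y * (y / z) ^ α + y * (z / y) ^ α) := by ring
    _ ≤ 2 * X + ε * (X ^ (1 + α) * z ^ (-α) + X ^ (1 - α) * (1 + z)) := by
        gcongr
        exact hy.2
    _ ≤ (2 * X + ε * (X ^ (1 + α) + X ^ (1 - α))) * (1 + z + z ^ (-α)) := by
        have h1 : 0 ≤ X * (z + z ^ (-α)) := by positivity
        have h2 : 0 ≤ ε * (X ^ (1 + α) * (1 + z)) := by positivity
        have h3 : 0 ≤ ε * (X ^ (1 - α) * z ^ (-α)) := by positivity
        linarith

theorem exists_mul_le_mul (hK : IsNearConstantKernel α ε K) (hα : α ∈ Ico (0 : ℝ) 1) (X : ℝ)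
    {a : ℝ} (ha : 0 < a) :
    ∃ C, 0 ≤ C ∧ ∀ y ∈ Ioc 0 X, ∀ z, a ≤ z → y * K y z ≤ C * z := by
  obtain ⟨C, hC, hle⟩ := hK.exists_mul_le hα X
  refine ⟨C * (a⁻¹ + 1 + a ^ (-α) * a⁻¹), by positivity, fun y hy z hz => ?_⟩
  have hz0 : 0 < z := ha.trans_le hz
  have hone : 1 ≤ a⁻¹ * z := by rwa [inv_mul_eq_div, one_le_div ha]
  have hpow : z ^ (-α) ≤ a ^ (-α) := rpow_le_rpow_of_nonpos ha hz (neg_nonpos.2 hα.1)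
  calc y * K y z ≤ C * (1 + z + z ^ (-α)) := hle y hy z hz0
    _ ≤ C * (a⁻¹ * z + z + a ^ (-α) * (a⁻¹ * z)) := by
        gcongr
        exact hpow.trans (le_mul_of_one_le_right (by positivity) hone)
    _ = C * (a⁻¹ + 1 + a ^ (-α) * a⁻¹) * z := by ring

end IsNearConstantKernel

/-! ### Calculus and measure theory on the line -/

theorem setLIntegral_Ioo_ofReal_deriv {G g : ℝ → ℝ} {a b : ℝ} (hab : a ≤ b)
    (hG : ∀ x ∈ Icc a b, HasDerivAt G (g x) x) (hg : ∀ x ∈ Ioo a b, 0 ≤ g x) :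
    ∫⁻ x in Ioo a b, ENNReal.ofReal (g x) = ENNReal.ofReal (G b - G a) := by
  have hcont : ContinuousOn G (Icc a b) := fun x hx => (hG x hx).continuousAt.continuousWithinAt
  have hint : IntegrableOn g (Ioc a b) := intervalIntegral.integrableOn_deriv_of_nonneg hcont
    (fun x hx => hG x (Ioo_subset_Icc_self hx)) hg
  rw [← intervalIntegral.integral_eq_sub_of_hasDerivAt_of_le hab hcont
      (fun x hx => hG x (Ioo_subset_Icc_self hx)) ((intervalIntegrable_iff_integrableOn_Ioc_of_le
        hab).2 hint), intervalIntegral.integral_of_le hab, integral_Ioc_eq_integral_Ioo,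
    ofReal_integral_eq_lintegral_ofReal (hint.mono_set Ioo_subset_Ioc_self)
      ((ae_restrict_iff' measurableSet_Ioo).2 (ae_of_all _ hg))]

section Primitive

variable {g : ℝ → ℝ≥0∞} {a : ℝ}

theorem integrableOn_toReal_Ioc (hg : Measurable g) {x : ℝ} (hfin : ∫⁻ y in Ioc a x, g y ≠ ∞) :
    IntegrableOn (fun y => (g y).toReal) (Ioc a x) :=
  integrable_toReal_of_lintegral_ne_top hg.aemeasurable hfin

theorem toReal_setLIntegral_Ioc (hg : Measurable g) {x : ℝ} (hax : a ≤ x)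
    (hfin : ∫⁻ y in Ioc a x, g y ≠ ∞) :
    (∫⁻ y in Ioc a x, g y).toReal = ∫ y in a..x, (g y).toReal := by
  rw [intervalIntegral.integral_of_le hax, integral_toReal hg.aemeasurable
    (ae_lt_top hg hfin)]

theorem continuousAt_toReal_setLIntegral_Ioc (hg : Measurable g)
    (hfin : ∀ x, ∫⁻ y in Ioc a x, g y ≠ ∞) {x : ℝ} (hx : a < x) :
    ContinuousAt (fun t => (∫⁻ y in Ioc a t, g y).toReal) x := by
  have hint : ContinuousOn (fun t => ∫ y in Ioc a t, (g y).toReal) (Icc a (x + 1)) :=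
    intervalIntegral.continuousOn_primitive
      ((integrableOn_Icc_iff_integrableOn_Ioc).2 (integrableOn_toReal_Ioc hg (hfin _)))
  refine (hint.continuousAt (Icc_mem_nhds hx (lt_add_one x))).congr (Eventually.of_forall ?_)
  intro t
  exact integral_toReal hg.aemeasurable (ae_lt_top hg (hfin t))

theorem differentiableAt_toReal_setLIntegral_Ioc (hg : Measurable g)
    (hfin : ∀ x, ∫⁻ y in Ioc a x, g y ≠ ∞) {x : ℝ} (hx : a < x) (hcont : ContinuousAt g x)
    (hgx : g x ≠ ∞) : DifferentiableAt ℝ (fun t => (∫⁻ y in Ioc a t, g y).toReal) x := by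
  have hderiv := intervalIntegral.integral_hasDerivAt_right
    ((intervalIntegrable_iff_integrableOn_Ioc_of_le hx.le).2
      (integrableOn_toReal_Ioc hg (hfin x)))
    hg.ennreal_toReal.stronglyMeasurable.stronglyMeasurableAtFilter
    ((ENNReal.tendsto_toReal hgx).comp hcont)
  refine hderiv.differentiableAt.congr_of_eventuallyEq ?_
  filter_upwards [Ioi_mem_nhds hx] with t ht
  exact toReal_setLIntegral_Ioc hg (le_of_lt ht) (hfin t)

end Primitive

theorem div_one_add_mul_le_of_neg_sq_le_deriv {w w' : ℝ → ℝ} {m P : ℝ} (hm : 0 < m)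
    (hw : ∀ p, 0 < p → 0 < w p) (hw' : ∀ p, 0 < p → HasDerivAt w (w' p) p)
    (hriccati : ∀ p, 0 < p → -w p ^ 2 ≤ w' p) (hlim : Tendsto w (𝓝[>] 0) (𝓝 m)) (hP : 0 < P) :
    m / (1 + m * P) ≤ w P := by
  have hderiv : ∀ p, 0 < p → HasDerivAt (fun p => (w p)⁻¹ - p) (-w' p / w p ^ 2 - 1) p :=
    fun p hp => ((hw' p hp).inv (hw p hp).ne').sub (hasDerivAt_id p)
  have hanti : AntitoneOn (fun p => (w p)⁻¹ - p) (Ioi 0) := by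
    refine antitoneOn_of_hasDerivWithinAt_nonpos (convex_Ioi 0)
      (fun p hp => (hderiv p hp).continuousAt.continuousWithinAt)
      (fun p hp => (hderiv p (interior_subset hp)).hasDerivWithinAt) fun p hp => ?_
    have hp0 : 0 < p := interior_subset hp
    rw [sub_nonpos, div_le_one (pow_pos (hw p hp0) 2)]
    linarith [hriccati p hp0]
  have hlim' : Tendsto (fun p => (w p)⁻¹ - p) (𝓝[>] 0) (𝓝 (m⁻¹ - 0)) :=
    (hlim.inv₀ hm.ne').sub (tendsto_id.mono_left nhdsWithin_le_nhds)
  have hle : (w P)⁻¹ - P ≤ m⁻¹ - 0 := by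
    refine ge_of_tendsto hlim' ?_
    filter_upwards [Ioo_mem_nhdsGT hP] with p hp
    exact hanti hp.1 hP hp.2.le
  have hwP := hw P hP
  rw [sub_zero, sub_le_iff_le_add, inv_le_comm₀ hwP (by positivity)] at hle
  refine le_of_eq_of_le ?_ hle
  field_simp

theorem two_mul_lintegral_prod_self {X : Type*} [MeasurableSpace X] (ν : Measure X) [SFinite ν]
    {g : X × X → ℝ≥0∞} (hg : Measurable g) :
    2 * ∫⁻ p, g p ∂(ν.prod ν) = ∫⁻ p, (g p + g p.swap) ∂(ν.prod ν) := by
  rw [lintegral_add_left hg, lintegral_prod_swap g, two_mul]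

theorem ae_prod_of_ae {X Y : Type*} [MeasurableSpace X] [MeasurableSpace Y] {μ : Measure X}
    {ν : Measure Y} {p : X → Prop} {q : Y → Prop} (hp : ∀ᵐ x ∂μ, p x)
    (hq : ∀ᵐ y ∂ν, q y) : ∀ᵐ z ∂(μ.prod ν), p z.1 ∧ q z.2 :=
  (Measure.quasiMeasurePreserving_fst.ae hp).and (Measure.quasiMeasurePreserving_snd.ae hq)

theorem ae_prod_fst_ne_snd {X : Type*} [MeasurableSpace X] [MeasurableEq X] (μ ν : Measure X)
    [SFinite ν] [NullSingletonClass ν] : ∀ᵐ z ∂(μ.prod ν), z.1 ≠ z.2 := by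
  refine (Measure.ae_prod_iff_ae_ae
    (measurableSet_eq_fun measurable_fst measurable_snd).compl).2 ?_
  exact ae_of_all _ fun x => (measure_eq_zero_iff_ae_notMem.1 (measure_singleton x)).mono
    fun y hy => Ne.symm hy

theorem lintegral_prod_self_eq_setLIntegral_add_swap (ν : Measure ℝ) [SFinite ν]
    [NullSingletonClass ν] {g : ℝ × ℝ → ℝ≥0∞} (hg : Measurable g) :
    ∫⁻ p, g p ∂(ν.prod ν) = ∫⁻ p in {p | p.1 < p.2}, (g p + g p.swap) ∂(ν.prod ν) := by
  set s : Set (ℝ × ℝ) := {p | p.1 < p.2}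
  have hs : MeasurableSet s := measurableSet_lt measurable_fst measurable_snd
  have hcompl : (sᶜ : Set (ℝ × ℝ)) =ᵐ[ν.prod ν] Prod.swap ⁻¹' s := by
    filter_upwards [ae_prod_fst_ne_snd ν ν] with p hp
    exact propext (not_lt.trans hp.symm.le_iff_lt)
  rw [lintegral_add_left hg, ← lintegral_add_compl g hs, Measure.restrict_congr_set hcompl]
  congr 1
  exact Measure.measurePreserving_swap.setLIntegral_comp_preimage hs (hg.comp measurable_swap)

theorem setLIntegral_prod_withDensity_fst_lt_snd (ν : Measure ℝ) [SFinite ν] {ρ : ℝ → ℝ≥0∞}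
    (hρ : Measurable ρ) {g : ℝ × ℝ → ℝ≥0∞} (hg : Measurable g) :
    ∫⁻ p in {p | p.1 < p.2}, g p ∂(ν.prod (volume.withDensity ρ)) =
      ∫⁻ s, ∫⁻ y in Iio (s / 2), ρ (s - y) * g (y, s - y) ∂ν := by
  have hs : MeasurableSet {p : ℝ × ℝ | p.1 < p.2} := measurableSet_lt measurable_fst measurable_snd
  set G := {p : ℝ × ℝ | p.1 < p.2}.indicator g
  have hG : Measurable G := hg.indicator hs
  calc ∫⁻ p in {p | p.1 < p.2}, g p ∂(ν.prod (volume.withDensity ρ))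
      = ∫⁻ y, (∫⁻ z, ρ z * G (y, z)) ∂ν := by
        rw [← lintegral_indicator hs, lintegral_prod _ hG.aemeasurable]
        exact lintegral_congr fun y =>
          lintegral_withDensity_eq_lintegral_mul _ hρ (hG.comp measurable_prodMk_left)
    _ = ∫⁻ y, (∫⁻ s, ρ (s - y) * G (y, s - y)) ∂ν :=
        lintegral_congr fun y => (lintegral_sub_right_eq_self (fun z => ρ z * G (y, z)) y).symm
    _ = ∫⁻ s, ∫⁻ y, ρ (s - y) * G (y, s - y) ∂ν :=
        lintegral_lintegral_swap (Measurable.aemeasurable (by fun_prop))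
    _ = ∫⁻ s, ∫⁻ y in Iio (s / 2), ρ (s - y) * g (y, s - y) ∂ν := by
        refine lintegral_congr fun s => ?_
        rw [← lintegral_indicator measurableSet_Iio]
        refine lintegral_congr fun y => ?_
        have hiff : y < s - y ↔ y < s / 2 := by constructor <;> intro h <;> linarith
        simp only [G, indicator, mem_ofPred_eq, mem_Iio, hiff, mul_ite, mul_zero]

/-! ### The mass flux of a size distribution -/

/-- The rate measure `y k(y, z) dν(y) dν(z)` at which mass is carried from size `y` to size `y + z`
by coagulation with a particle of size `z`. -/
noncomputable def coagMeasure (ν : Measure ℝ) (k : ℝ → ℝ → ℝ) : Measure (ℝ × ℝ) :=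
  (ν.prod ν).withDensity fun p => ENNReal.ofReal (p.1 * k p.1 p.2)

/-- The mass flux `∫_{y < x} ∫_{z > x - y} y k(y, z) dν(z) dν(y)` through size `x`, allowed to be
infinite. -/
noncomputable def flux (ν : Measure ℝ) (k : ℝ → ℝ → ℝ) (x : ℝ) : ℝ≥0∞ :=
  coagMeasure ν k {p | p.1 < x ∧ x < p.1 + p.2}

/-- The equation `x² dν(x) = flux(x) dx`, tested against nonnegative measurable functions `h`. -/
def IsWeakProfile (ν : Measure ℝ) (k : ℝ → ℝ → ℝ) : Prop :=
  ∀ h : ℝ → ℝ≥0∞, Measurable h → ∫⁻ x, ENNReal.ofReal (x ^ 2) * h x ∂ν =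
    ∫⁻ p, (∫⁻ x in Ioo p.1 (p.1 + p.2), h x) ∂coagMeasure ν k

section Flux

variable {ν : Measure ℝ} {k : ℝ → ℝ → ℝ} {α ε : ℝ}

theorem measurableSet_setOf_fst_lt_lt_add :
    MeasurableSet {q : ℝ × ℝ × ℝ | q.2.1 < q.1 ∧ q.1 < q.2.1 + q.2.2} :=
  (measurableSet_lt (measurable_fst.comp measurable_snd) measurable_fst).inter
    (measurableSet_lt measurable_fst
      ((measurable_fst.comp measurable_snd).add (measurable_snd.comp measurable_snd)))

theorem coagMeasure_absolutelyContinuous : coagMeasure ν k ≪ ν.prod ν :=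
  withDensity_absolutelyContinuous _ _

theorem ae_coagMeasure_pos (hν : ∀ᵐ x ∂ν, 0 < x) :
    ∀ᵐ p ∂coagMeasure ν k, 0 < p.1 ∧ 0 < p.2 :=
  coagMeasure_absolutelyContinuous.ae_le (ae_prod_of_ae hν hν)

instance [SFinite ν] : SFinite (coagMeasure ν k) :=
  inferInstanceAs (SFinite (Measure.withDensity _ _))

theorem lintegral_coagMeasure (hk : Measurable fun p : ℝ × ℝ => k p.1 p.2) {g : ℝ × ℝ → ℝ≥0∞}
    (hg : Measurable g) : ∫⁻ p, g p ∂coagMeasure ν k =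
      ∫⁻ p, ENNReal.ofReal (p.1 * k p.1 p.2) * g p ∂(ν.prod ν) :=
  lintegral_withDensity_eq_lintegral_mul _ (measurable_fst.mul hk).ennreal_ofReal hg

theorem coagMeasure_apply (hk : Measurable fun p : ℝ × ℝ => k p.1 p.2) [SFinite ν]
    {s : Set (ℝ × ℝ)} (hs : MeasurableSet s) : coagMeasure ν k s =
      ∫⁻ y, ∫⁻ z in Prod.mk y ⁻¹' s, ENNReal.ofReal (y * k y z) ∂ν ∂ν := by
  have hmeas : Measurable fun p : ℝ × ℝ => ENNReal.ofReal (p.1 * k p.1 p.2) :=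
    (measurable_fst.mul hk).ennreal_ofReal
  rw [coagMeasure, withDensity_apply _ hs, ← lintegral_indicator hs,
    lintegral_prod _ (hmeas.indicator hs).aemeasurable]
  refine lintegral_congr fun y => ?_
  rw [← lintegral_indicator (measurable_prodMk_left hs)]
  rfl

variable [SFinite ν]

theorem measurable_flux : Measurable (flux ν k) :=
  measurable_measure_prodMk_left measurableSet_setOf_fst_lt_lt_add

theorem setLIntegral_mul_flux {h : ℝ → ℝ≥0∞} (hh : Measurable h) (s : Set ℝ) :
    ∫⁻ x in s, h x * flux ν k x =
      ∫⁻ p, (∫⁻ x in Ioo p.1 (p.1 + p.2) ∩ s, h x) ∂coagMeasure ν k := by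
  calc ∫⁻ x in s, h x * flux ν k x
      = ∫⁻ x in s, ∫⁻ p, {q : ℝ × ℝ × ℝ | q.2.1 < q.1 ∧ q.1 < q.2.1 + q.2.2}.indicator
          (fun q => h q.1) (x, p) ∂coagMeasure ν k := by
        refine lintegral_congr fun x => ?_
        rw [flux, ← setLIntegral_const]
        exact (lintegral_indicator
          (measurable_prodMk_left measurableSet_setOf_fst_lt_lt_add) _).symm
    _ = ∫⁻ p, (∫⁻ x in s, {q : ℝ × ℝ × ℝ | q.2.1 < q.1 ∧ q.1 < q.2.1 + q.2.2}.indicator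
          (fun q => h q.1) (x, p)) ∂coagMeasure ν k :=
        lintegral_lintegral_swap ((hh.comp measurable_fst).indicator
          measurableSet_setOf_fst_lt_lt_add).aemeasurable
    _ = ∫⁻ p, (∫⁻ x in Ioo p.1 (p.1 + p.2) ∩ s, h x) ∂coagMeasure ν k := by
        refine lintegral_congr fun p => ?_
        rw [← Measure.restrict_restrict measurableSet_Ioo, ← lintegral_indicator measurableSet_Ioo]
        rfl

end Flux

section FluxFinite

variable {ν : Measure ℝ} {k : ℝ → ℝ → ℝ} {α ε : ℝ}

theorem measurableSet_setOf_lt_and_le (b : ℝ) : MeasurableSet {p : ℝ × ℝ | p.1 < b ∧ b ≤ p.2} :=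
  measurableSet_Iio.prod measurableSet_Ici

theorem coagMeasure_Icc_prod_Ici_lt_top (hα : α ∈ Ico (0 : ℝ) 1)
    (hK : IsNearConstantKernel α ε k) (hint : Integrable (fun x => x) ν) {a : ℝ} (ha : 0 < a)
    (b : ℝ) :
    coagMeasure ν k (Icc a b ×ˢ Ici a) < ∞ := by
  obtain ⟨C, hC, hle⟩ := hK.exists_mul_le_mul hα b ha
  have hbound : ∀ p ∈ Icc a b ×ˢ Ici a,
      ENNReal.ofReal (p.1 * k p.1 p.2) ≤ ENNReal.ofReal (C / a * (p.1 * p.2)) := by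
    rintro ⟨y, z⟩ ⟨hy, hz⟩
    have hz0 : 0 < z := ha.trans_le hz
    refine ENNReal.ofReal_le_ofReal ((hle y ⟨ha.trans_le hy.1, hy.2⟩ z hz).trans ?_)
    rw [div_mul_eq_mul_div, le_div_iff₀ ha]
    nlinarith [mul_nonneg (mul_nonneg hC hz0.le) (sub_nonneg.2 hy.1)]
  rw [coagMeasure, withDensity_apply _ (measurableSet_Icc.prod measurableSet_Ici)]
  exact (setLIntegral_mono' (measurableSet_Icc.prod measurableSet_Ici) hbound).trans_lt
    (((hint.mul_prod hint).const_mul (C / a)).integrableOn.lintegral_lt_top)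

theorem coagMeasure_setOf_lt_and_le_lt_top (hα : α ∈ Ico (0 : ℝ) 1)
    (hK : IsNearConstantKernel α ε k) (hpos : ∀ᵐ x ∂ν, 0 < x) (hint : Integrable (fun x => x) ν)
    {b x : ℝ} (hx : x ∈ Ioo 0 b) (hflux : flux ν k x < ∞) :
    coagMeasure ν k {p | p.1 < b ∧ b ≤ p.2} < ∞ := by
  have hsubset : {p : ℝ × ℝ | p.1 < b ∧ b ≤ p.2} ≤ᵐ[coagMeasure ν k]
      ({p | p.1 < x ∧ x < p.1 + p.2} ∪ Icc x b ×ˢ Ici x : Set (ℝ × ℝ)) := by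
    filter_upwards [ae_coagMeasure_pos hpos] with p hp hpb
    rcases lt_or_ge p.1 x with h | h
    · exact Or.inl ⟨h, by linarith [hp.1, hpb.2, hx.2]⟩
    · exact Or.inr ⟨⟨h, hpb.1.le⟩, hx.2.le.trans hpb.2⟩
  calc _ ≤ coagMeasure ν k _ := measure_mono_ae hsubset
    _ ≤ flux ν k x + coagMeasure ν k (Icc x b ×ˢ Ici x) := measure_union_le _ _
    _ < ∞ := ENNReal.add_lt_top.2
        ⟨hflux, coagMeasure_Icc_prod_Ici_lt_top hα hK hint hx.1 b⟩

variable [SFinite ν]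

theorem setLIntegral_coagMeasure_snd_le (hK : IsNearConstantKernel α ε k)
    (hk : Measurable fun p : ℝ × ℝ => k p.1 p.2) (hpos : ∀ᵐ x ∂ν, 0 < x) (b R : ℝ) :
    ∫⁻ p in Icc b R ×ˢ Iio b, ENNReal.ofReal p.2 ∂coagMeasure ν k ≤
      ENNReal.ofReal R * coagMeasure ν k {p | p.1 < b ∧ b ≤ p.2} := by
  have hs : MeasurableSet (Icc b R ×ˢ Iio b) := measurableSet_Icc.prod measurableSet_Iio
  have ht := measurableSet_setOf_lt_and_le b
  have hsnd : Measurable fun p : ℝ × ℝ => ENNReal.ofReal p.2 := by fun_prop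
  rw [← setLIntegral_const, ← lintegral_indicator hs, ← lintegral_indicator ht,
    lintegral_coagMeasure hk (hsnd.indicator hs),
    lintegral_coagMeasure hk (measurable_const.indicator ht), ← lintegral_prod_swap]
  refine lintegral_mono_ae ?_
  filter_upwards [ae_prod_of_ae hpos hpos] with ⟨y, z⟩ ⟨hy, hz⟩
  by_cases hp : (z, y) ∈ Icc b R ×ˢ Iio b
  · have hp' : (y, z) ∈ {p : ℝ × ℝ | p.1 < b ∧ b ≤ p.2} := ⟨hp.2, hp.1.1⟩
    have hk0 := hK.nonneg hy hz
    simp only [Prod.swap_prod_mk, indicator_of_mem hp, indicator_of_mem hp', hK.symm hz hy]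
    rw [← ENNReal.ofReal_mul (by positivity), ← ENNReal.ofReal_mul (by positivity)]
    refine ENNReal.ofReal_le_ofReal ?_
    nlinarith [mul_nonneg (mul_nonneg hy.le hk0) (sub_nonneg.2 hp.1.2)]
  · simp only [Prod.swap_prod_mk, indicator_of_notMem hp, mul_zero, zero_le]

theorem volume_Ioo_inter_Ioo_le {y z r R : ℝ} (hr : 0 < r) :
    volume (Ioo y (y + z) ∩ Ioo r R) ≤
      {p : ℝ × ℝ | p.1 < r / 2 ∧ r / 2 ≤ p.2}.indicator (fun _ => ENNReal.ofReal R) (y, z) +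
        (Icc (r / 2) R ×ˢ Ici (r / 2)).indicator (fun _ => ENNReal.ofReal R) (y, z) +
        (Icc (r / 2) R ×ˢ Iio (r / 2)).indicator (fun p => ENNReal.ofReal p.2) (y, z) := by
  have hle : volume (Ioo y (y + z) ∩ Ioo r R) ≤ ENNReal.ofReal R := by
    rw [Ioo_inter_Ioo, volume_Ioo]
    exact ENNReal.ofReal_le_ofReal
      (by linarith [inf_le_right (a := y + z) (b := R), le_sup_right (a := y) (b := r)])
  rcases lt_or_ge y (r / 2) with hyr | hyr <;> rcases lt_or_ge z (r / 2) with hzr | hzr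
  · rw [Ioo_inter_Ioo, Ioo_eq_empty, measure_empty]
    · exact zero_le
    · exact not_lt.2 (inf_le_left.trans ((by linarith : y + z ≤ r).trans le_sup_right))
  · refine hle.trans ?_
    simp [indicator, hyr, hyr.not_ge, hzr]
  all_goals rcases lt_or_ge R y with hRy | hRy
  · rw [Ioo_inter_Ioo, Ioo_eq_empty, measure_empty]
    · exact zero_le
    · exact not_lt.2 (inf_le_right.trans (hRy.le.trans le_sup_left))
  · refine (measure_mono inter_subset_left).trans ?_
    simp [indicator, hyr, hzr, hRy]
  · rw [Ioo_inter_Ioo, Ioo_eq_empty, measure_empty]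
    · exact zero_le
    · exact not_lt.2 (inf_le_right.trans (hRy.le.trans le_sup_left))
  · refine hle.trans ?_
    simp [indicator, hyr, hzr, hzr.not_gt, hRy]

theorem setLIntegral_flux_lt_top (hα : α ∈ Ico (0 : ℝ) 1)
    (hK : IsNearConstantKernel α ε k) (hk : Measurable fun p : ℝ × ℝ => k p.1 p.2)
    (hpos : ∀ᵐ x ∂ν, 0 < x) (hint : Integrable (fun x => x) ν) {r R : ℝ} (hr : 0 < r)
    (hfin : coagMeasure ν k {p | p.1 < r / 2 ∧ r / 2 ≤ p.2} < ∞) :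
    ∫⁻ x in Ioo r R, flux ν k x < ∞ := by
  have htonelli := setLIntegral_mul_flux (ν := ν) (k := k) (h := fun _ => 1) measurable_const
    (Ioo r R)
  simp only [one_mul, setLIntegral_one] at htonelli
  calc ∫⁻ x in Ioo r R, flux ν k x
      = ∫⁻ p, volume (Ioo p.1 (p.1 + p.2) ∩ Ioo r R) ∂coagMeasure ν k := htonelli
    _ ≤ ∫⁻ p, ({p : ℝ × ℝ | p.1 < r / 2 ∧ r / 2 ≤ p.2}.indicator (fun _ => ENNReal.ofReal R) p +
        (Icc (r / 2) R ×ˢ Ici (r / 2)).indicator (fun _ => ENNReal.ofReal R) p +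
        (Icc (r / 2) R ×ˢ Iio (r / 2)).indicator (fun p => ENNReal.ofReal p.2) p)
          ∂coagMeasure ν k :=
        lintegral_mono fun p => volume_Ioo_inter_Ioo_le hr
    _ = ENNReal.ofReal R * coagMeasure ν k {p | p.1 < r / 2 ∧ r / 2 ≤ p.2} +
        ENNReal.ofReal R * coagMeasure ν k (Icc (r / 2) R ×ˢ Ici (r / 2)) +
        ∫⁻ p in Icc (r / 2) R ×ˢ Iio (r / 2), ENNReal.ofReal p.2 ∂coagMeasure ν k := by
        have h1 := measurableSet_setOf_lt_and_le (r / 2)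
        have h2 : MeasurableSet (Icc (r / 2) R ×ˢ Ici (r / 2)) :=
          measurableSet_Icc.prod measurableSet_Ici
        have h3 : MeasurableSet (Icc (r / 2) R ×ˢ Iio (r / 2)) :=
          measurableSet_Icc.prod measurableSet_Iio
        have hsnd : Measurable fun p : ℝ × ℝ => ENNReal.ofReal p.2 := by fun_prop
        rw [lintegral_add_right _ (hsnd.indicator h3),
          lintegral_add_left (measurable_const.indicator h1), lintegral_indicator_const h1,
          lintegral_indicator_const h2, lintegral_indicator h3]
    _ < ∞ := by
        refine ENNReal.add_lt_top.2 ⟨ENNReal.add_lt_top.2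
          ⟨ENNReal.mul_lt_top ENNReal.ofReal_lt_top hfin, ENNReal.mul_lt_top ENNReal.ofReal_lt_top
            (coagMeasure_Icc_prod_Ici_lt_top hα hK hint (half_pos hr) R)⟩, ?_⟩
        exact (setLIntegral_coagMeasure_snd_le hK hk hpos _ R).trans_lt
          (ENNReal.mul_lt_top ENNReal.ofReal_lt_top hfin)

theorem ae_flux_lt_top (hα : α ∈ Ico (0 : ℝ) 1)
    (hK : IsNearConstantKernel α ε k) (hk : Measurable fun p : ℝ × ℝ => k p.1 p.2)
    (hpos : ∀ᵐ x ∂ν, 0 < x) (hint : Integrable (fun x => x) ν)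
    (hinf : ∀ b > 0, (∀ x ∈ Ioo 0 b, flux ν k x = ∞) → ν (Iio b) = 0) :
    ∀ᵐ x ∂volume.restrict (Ioi (0 : ℝ)), flux ν k x < ∞ := by
  have hcross : ∀ b > 0, coagMeasure ν k {p | p.1 < b ∧ b ≤ p.2} < ∞ := by
    intro b hb
    by_contra hcon
    have hnull : ν (Iio b) = 0 := hinf b hb fun x hx => by
      by_contra hx'
      exact hcon (coagMeasure_setOf_lt_and_le_lt_top hα hK hpos hint hx (lt_top_iff_ne_top.2 hx'))
    refine hcon (lt_of_eq_of_lt ?_ ENNReal.zero_lt_top)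
    refine coagMeasure_absolutelyContinuous (measure_mono_null (t := Iio b ×ˢ univ)
      (fun p hp => ⟨hp.1, mem_univ _⟩) ?_)
    rw [Measure.prod_prod, hnull, zero_mul]
  rw [ae_iff, Measure.restrict_apply₀' measurableSet_Ioi.nullMeasurableSet]
  refine measure_null_of_locally_null _ fun x ⟨_, hx⟩ =>
    ⟨_, inter_mem_nhdsWithin _ (Ioo_mem_nhds (half_lt_self hx) (lt_add_one x)), ?_⟩
  refine measure_mono_null (t := {x | ¬flux ν k x < ∞} ∩ Ioo (x / 2) (x + 1))
    (fun y hy => ⟨hy.1.1, hy.2⟩) ?_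
  rw [← Measure.restrict_apply₀' measurableSet_Ioo.nullMeasurableSet, ← ae_iff]
  exact ae_lt_top measurable_flux (setLIntegral_flux_lt_top hα hK hk hpos hint (half_pos hx)
    (hcross _ (half_pos (half_pos hx)))).ne

theorem isWeakProfile_of_ae_eq {ρ : ℝ → ℝ≥0∞} (hρ : AEMeasurable ρ (volume.restrict (Ioi 0)))
    (hν : ν = (volume.restrict (Ioi 0)).withDensity ρ) (hpos : ∀ᵐ x ∂ν, 0 < x)
    (hflux : ∀ᵐ x ∂volume.restrict (Ioi (0 : ℝ)), ENNReal.ofReal (x ^ 2) * ρ x = flux ν k x) :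
    IsWeakProfile ν k := fun h hh => by
  have hmeas : Measurable fun x : ℝ => ENNReal.ofReal (x ^ 2) * h x :=
    (by fun_prop : Measurable fun x : ℝ => ENNReal.ofReal (x ^ 2)).mul hh
  calc ∫⁻ x, ENNReal.ofReal (x ^ 2) * h x ∂ν
      = ∫⁻ x in Ioi 0, ρ x * (ENNReal.ofReal (x ^ 2) * h x) := by
        rw [hν]
        exact lintegral_withDensity_eq_lintegral_mul₀ hρ hmeas.aemeasurable
    _ = ∫⁻ x in Ioi 0, h x * flux ν k x := by
        refine lintegral_congr_ae (hflux.mono fun x hx => ?_)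
        simp only [← hx]
        ring
    _ = ∫⁻ p, (∫⁻ x in Ioo p.1 (p.1 + p.2) ∩ Ioi 0, h x) ∂coagMeasure ν k :=
        setLIntegral_mul_flux hh _
    _ = ∫⁻ p, (∫⁻ x in Ioo p.1 (p.1 + p.2), h x) ∂coagMeasure ν k := by
        refine lintegral_congr_ae ((ae_coagMeasure_pos hpos).mono fun p hp => ?_)
        have hsubset : Ioo p.1 (p.1 + p.2) ⊆ Ioi 0 := fun x hx => hp.1.trans hx.1
        simp only [inter_eq_left.2 hsubset]

end FluxFinite

section TestFunction

variable {F F' : ℝ → ℝ}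

theorem antitoneOn_div_self (hF : ∀ x, 0 < x → HasDerivAt F (F' x) x)
    (hle : ∀ x, 0 < x → x * F' x ≤ F x) : AntitoneOn (fun x => F x / x) (Ioi 0) := by
  have hderiv : ∀ x, 0 < x → HasDerivAt (fun x => F x / x) ((F' x * x - F x * 1) / x ^ 2) x :=
    fun x hx => (hF x hx).div (hasDerivAt_id x) hx.ne'
  refine antitoneOn_of_hasDerivWithinAt_nonpos (convex_Ioi 0)
    (fun x hx => (hderiv x hx).continuousAt.continuousWithinAt)
    (fun x hx => (hderiv x (interior_subset hx)).hasDerivWithinAt) fun x hx => ?_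
  exact div_nonpos_of_nonpos_of_nonneg (by linarith [hle x (interior_subset hx)]) (sq_nonneg x)

theorem setLIntegral_Ioo_sub_mul_deriv_div_sq (hF : ∀ x, 0 < x → HasDerivAt F (F' x) x)
    (hle : ∀ x, 0 < x → x * F' x ≤ F x) {y z : ℝ} (hy : 0 < y) (hz : 0 < z) :
    ∫⁻ x in Ioo y (y + z), ENNReal.ofReal ((F x - x * F' x) / x ^ 2) =
      ENNReal.ofReal (F y / y - F (y + z) / (y + z)) := by
  rw [setLIntegral_Ioo_ofReal_deriv (G := fun x => -(F x / x)) (by linarith)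
    (fun x hx => ?_) (fun x hx => ?_)]
  · congr 1
    ring
  · have hx0 : 0 < x := hy.trans_le hx.1
    refine ((hF x hx0).div (hasDerivAt_id x) hx0.ne').neg.congr_deriv ?_
    simp only [id_eq]
    ring
  · exact div_nonneg (sub_nonneg.2 (hle x (hy.trans hx.1))) (sq_nonneg x)

variable {ν : Measure ℝ} {k : ℝ → ℝ → ℝ} {α ε : ℝ} [SFinite ν]

theorem IsWeakProfile.two_mul_lintegral (hwk : IsWeakProfile ν k)
    (hK : IsNearConstantKernel α ε k) (hk : Measurable fun p : ℝ × ℝ => k p.1 p.2)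
    (hpos : ∀ᵐ x ∂ν, 0 < x) (hFm : Measurable F) (hF'm : Measurable F')
    (hF : ∀ x, 0 < x → HasDerivAt F (F' x) x) (hle : ∀ x, 0 < x → x * F' x ≤ F x) :
    2 * ∫⁻ x, ENNReal.ofReal (F x - x * F' x) ∂ν =
      ∫⁻ p, ENNReal.ofReal (k p.1 p.2 * (F p.1 + F p.2 - F (p.1 + p.2))) ∂ν.prod ν := by
  set g : ℝ × ℝ → ℝ≥0∞ := fun p =>
    ENNReal.ofReal (p.1 * k p.1 p.2) * ENNReal.ofReal (F p.1 / p.1 - F (p.1 + p.2) / (p.1 + p.2))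
  have htest : ∫⁻ x, ENNReal.ofReal (F x - x * F' x) ∂ν = ∫⁻ p, g p ∂ν.prod ν := calc
    _ = ∫⁻ x, ENNReal.ofReal (x ^ 2) * ENNReal.ofReal ((F x - x * F' x) / x ^ 2) ∂ν := by
        refine lintegral_congr_ae (hpos.mono fun x hx => ?_)
        simp only [← ENNReal.ofReal_mul (sq_nonneg x), mul_div_cancel₀ _ (pow_pos hx 2).ne']
    _ = ∫⁻ p, (∫⁻ x in Ioo p.1 (p.1 + p.2), ENNReal.ofReal ((F x - x * F' x) / x ^ 2))
          ∂coagMeasure ν k := hwk _ (by fun_prop)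
    _ = ∫⁻ p, ENNReal.ofReal (F p.1 / p.1 - F (p.1 + p.2) / (p.1 + p.2)) ∂coagMeasure ν k :=
        lintegral_congr_ae ((ae_coagMeasure_pos hpos).mono fun p hp =>
          setLIntegral_Ioo_sub_mul_deriv_div_sq hF hle hp.1 hp.2)
    _ = ∫⁻ p, g p ∂ν.prod ν := lintegral_coagMeasure hk (by fun_prop)
  rw [htest, two_mul_lintegral_prod_self ν (by fun_prop)]
  refine lintegral_congr_ae ((ae_prod_of_ae hpos hpos).mono fun ⟨y, z⟩ ⟨hy, hz⟩ => ?_)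
  have hk0 := hK.nonneg hy hz
  have hmono : ∀ {a b : ℝ}, 0 < a → 0 < b → 0 ≤ F a / a - F (a + b) / (a + b) := fun ha hb =>
    sub_nonneg.2 (antitoneOn_div_self hF hle ha (add_pos ha hb) (by linarith))
  have hyz := hmono hy hz
  have hzy := hmono hz hy
  simp only [g, Prod.swap_prod_mk, hK.symm hz hy]
  rw [← ENNReal.ofReal_mul (by positivity), ← ENNReal.ofReal_mul (by positivity),
    ← ENNReal.ofReal_add (by positivity) (by positivity), add_comm z y]
  congr 1
  field_simp
  ring

theorem add_le_add_of_mul_deriv_le (hF : ∀ x, 0 < x → HasDerivAt F (F' x) x)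
    (hle : ∀ x, 0 < x → x * F' x ≤ F x) {y z : ℝ} (hy : 0 < y) (hz : 0 < z) :
    F (y + z) ≤ F y + F z := by
  have hyz : F (y + z) / (y + z) ≤ F y / y :=
    antitoneOn_div_self hF hle hy (add_pos hy hz) (by linarith)
  have hzy : F (y + z) / (y + z) ≤ F z / z :=
    antitoneOn_div_self hF hle hz (add_pos hy hz) (by linarith)
  rw [le_div_iff₀ hy] at hyz
  rw [le_div_iff₀ hz] at hzy
  calc F (y + z) = F (y + z) / (y + z) * y + F (y + z) / (y + z) * z := by field_simp
    _ ≤ F y + F z := add_le_add hyz hzy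

theorem IsWeakProfile.integrable_and_two_mul_integral (hwk : IsWeakProfile ν k)
    (hK : IsNearConstantKernel α ε k) (hk : Measurable fun p : ℝ × ℝ => k p.1 p.2)
    (hpos : ∀ᵐ x ∂ν, 0 < x) (hFm : Measurable F) (hF'm : Measurable F')
    (hF : ∀ x, 0 < x → HasDerivAt F (F' x) x) (hle : ∀ x, 0 < x → x * F' x ≤ F x)
    (hint : Integrable (fun x => F x - x * F' x) ν) :
    Integrable (fun p : ℝ × ℝ => k p.1 p.2 * (F p.1 + F p.2 - F (p.1 + p.2))) (ν.prod ν) ∧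
      2 * ∫ x, (F x - x * F' x) ∂ν =
        ∫ p, k p.1 p.2 * (F p.1 + F p.2 - F (p.1 + p.2)) ∂ν.prod ν := by
  have hid := hwk.two_mul_lintegral hK hk hpos hFm hF'm hF hle
  have hmeas : Measurable fun p : ℝ × ℝ => k p.1 p.2 * (F p.1 + F p.2 - F (p.1 + p.2)) := by
    fun_prop
  have hnonneg : 0 ≤ᵐ[ν.prod ν] fun p => k p.1 p.2 * (F p.1 + F p.2 - F (p.1 + p.2)) :=
    (ae_prod_of_ae hpos hpos).mono fun p hp => mul_nonneg (hK.nonneg hp.1 hp.2)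
      (sub_nonneg.2 (add_le_add_of_mul_deriv_le hF hle hp.1 hp.2))
  have hfin := hint.lintegral_lt_top
  refine ⟨⟨hmeas.aestronglyMeasurable, ?_⟩, ?_⟩
  · rw [hasFiniteIntegral_iff_ofReal hnonneg, ← hid]
    exact ENNReal.mul_lt_top ENNReal.ofNat_lt_top hfin
  · rw [integral_eq_lintegral_of_nonneg_ae hnonneg hmeas.aestronglyMeasurable, ← hid,
      integral_eq_lintegral_of_nonneg_ae (hpos.mono fun x hx => sub_nonneg.2 (hle x hx))
        hint.aestronglyMeasurable, ENNReal.toReal_mul, ENNReal.toReal_ofNat]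

theorem IsWeakProfile.integral_prod_le_integral (hwk : IsWeakProfile ν k)
    (hK : IsNearConstantKernel α ε k) (hk : Measurable fun p : ℝ × ℝ => k p.1 p.2)
    (hpos : ∀ᵐ x ∂ν, 0 < x) (hFm : Measurable F) (hF'm : Measurable F')
    (hF : ∀ x, 0 < x → HasDerivAt F (F' x) x) (hle : ∀ x, 0 < x → x * F' x ≤ F x)
    (hint : Integrable (fun x => F x - x * F' x) ν) {g : ℝ × ℝ → ℝ} (hg : Integrable g (ν.prod ν))
    (hgF : ∀ y z, 0 < y → 0 < z → g (y, z) ≤ F y + F z - F (y + z)) :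
    ∫ p, g p ∂ν.prod ν ≤ ∫ x, (F x - x * F' x) ∂ν := by
  obtain ⟨hintk, hid⟩ := hwk.integrable_and_two_mul_integral hK hk hpos hFm hF'm hF hle hint
  have htwo : 2 * ∫ p, g p ∂ν.prod ν ≤ 2 * ∫ x, (F x - x * F' x) ∂ν := by
    rw [hid, ← integral_const_mul]
    refine integral_mono_ae (hg.const_mul 2) hintk
      ((ae_prod_of_ae hpos hpos).mono fun ⟨y, z⟩ ⟨hy, hz⟩ => ?_)
    calc 2 * g (y, z) ≤ 2 * (F y + F z - F (y + z)) := by linarith [hgF y z hy hz]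
      _ ≤ k y z * (F y + F z - F (y + z)) := mul_le_mul_of_nonneg_right (hK.two_le hy hz)
        (sub_nonneg.2 (add_le_add_of_mul_deriv_le hF hle hy hz))
  linarith

end TestFunction

/-! ### The Laplace exponent -/

/-- The desingularised Laplace transform `Q(p) = ∫ (1 - e^{-px}) dν(x)`, finite for every measure of
finite mass. -/
noncomputable def laplaceExponent (ν : Measure ℝ) (p : ℝ) : ℝ := ∫ x, (1 - exp (-(p * x))) ∂ν

theorem one_sub_exp_nonneg {t : ℝ} (ht : 0 ≤ t) : 0 ≤ 1 - exp (-t) := by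
  simpa using ht

theorem one_sub_exp_le (t : ℝ) : 1 - exp (-t) ≤ t := by
  linarith [one_sub_le_exp_neg t]

theorem one_sub_exp_le_rpow {t θ : ℝ} (ht : 0 < t) (hθ : θ ∈ Icc (0 : ℝ) 1) :
    1 - exp (-t) ≤ t ^ θ := by
  rcases le_or_gt t 1 with h | h
  · calc 1 - exp (-t) ≤ t ^ (1 : ℝ) := (one_sub_exp_le t).trans_eq (rpow_one t).symm
      _ ≤ t ^ θ := rpow_le_rpow_of_exponent_ge ht h hθ.2
  · exact (sub_le_self 1 (exp_pos _).le).trans (one_le_rpow h.le hθ.1)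

theorem div_rpow_mul_one_sub_exp_mul_le {α p y z : ℝ} (hα : α ∈ Icc (0 : ℝ) 1) (hp : 0 < p)
    (hy : 0 < y) (hz : 0 < z) :
    (y / z) ^ α * ((1 - exp (-(p * y))) * (1 - exp (-(p * z)))) ≤
      p ^ (2 - α) * (y * z ^ (1 - α)) := by
  have hpy : 1 - exp (-(p * y)) ≤ (p * y) ^ (1 - α) :=
    one_sub_exp_le_rpow (mul_pos hp hy) ⟨by linarith [hα.2], by linarith [hα.1]⟩
  calc _ ≤ (y / z) ^ α * ((p * y) ^ (1 - α) * (p * z)) := by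
        gcongr
        exacts [one_sub_exp_nonneg (by positivity), one_sub_exp_le _]
    _ = p ^ (2 - α) * (y * z ^ (1 - α)) := by
        rw [div_rpow hy.le hz.le, mul_rpow hp.le hy.le, rpow_sub hp, rpow_sub hp, rpow_sub hy,
          rpow_sub hz, rpow_one, rpow_one, rpow_one, rpow_ofNat]
        field_simp

theorem hasDerivAt_one_sub_exp (p x : ℝ) :
    HasDerivAt (fun x => 1 - exp (-(p * x))) (p * exp (-(p * x))) x := by
  refine (((hasDerivAt_id x).const_mul p).neg.exp.const_sub 1).congr_deriv ?_
  simp only [id_eq, Pi.neg_apply]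
  ring

theorem mul_deriv_one_sub_exp_le (p x : ℝ) : x * (p * exp (-(p * x))) ≤ 1 - exp (-(p * x)) := by
  have h := mul_le_mul_of_nonneg_right (add_one_le_exp (p * x)) (exp_pos (-(p * x))).le
  rw [← exp_add, add_neg_cancel, exp_zero] at h
  linarith

theorem one_sub_exp_add_sub (p y z : ℝ) :
    1 - exp (-(p * y)) + (1 - exp (-(p * z))) - (1 - exp (-(p * (y + z)))) =
      (1 - exp (-(p * y))) * (1 - exp (-(p * z))) := by
  rw [mul_add, neg_add, exp_add]
  ring

section LaplaceExponent

variable {ν : Measure ℝ} {k : ℝ → ℝ → ℝ} {α ε p : ℝ}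

theorem integrable_one_sub_exp (hpos : ∀ᵐ x ∂ν, 0 < x) (hint : Integrable (fun x => x) ν)
    (hp : 0 ≤ p) : Integrable (fun x => 1 - exp (-(p * x))) ν := by
  refine (hint.const_mul p).mono' (by fun_prop) (hpos.mono fun x hx => ?_)
  rw [norm_of_nonneg (one_sub_exp_nonneg (by positivity))]
  exact one_sub_exp_le _

theorem integrable_one_sub_exp_sub_mul (hpos : ∀ᵐ x ∂ν, 0 < x)
    (hint : Integrable (fun x => x) ν) (hp : 0 ≤ p) :
    Integrable (fun x => 1 - exp (-(p * x)) - x * (p * exp (-(p * x)))) ν := by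
  refine (hint.const_mul p).mono' (by fun_prop) (hpos.mono fun x hx => ?_)
  have hle := mul_deriv_one_sub_exp_le p x
  have hnonneg : 0 ≤ x * (p * exp (-(p * x))) := by positivity
  rw [norm_of_nonneg (by linarith)]
  linarith [one_sub_exp_le (p * x)]

variable [SFinite ν]

theorem IsWeakProfile.integrable_and_two_mul_integral_one_sub_exp (hwk : IsWeakProfile ν k)
    (hK : IsNearConstantKernel α ε k) (hk : Measurable fun p : ℝ × ℝ => k p.1 p.2)
    (hpos : ∀ᵐ x ∂ν, 0 < x) (hint : Integrable (fun x => x) ν) (hp : 0 ≤ p) :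
    Integrable (fun q : ℝ × ℝ =>
        k q.1 q.2 * ((1 - exp (-(p * q.1))) * (1 - exp (-(p * q.2))))) (ν.prod ν) ∧
      2 * ∫ x, (1 - exp (-(p * x)) - x * (p * exp (-(p * x)))) ∂ν =
        ∫ q, k q.1 q.2 * ((1 - exp (-(p * q.1))) * (1 - exp (-(p * q.2)))) ∂ν.prod ν := by
  simpa only [one_sub_exp_add_sub] using hwk.integrable_and_two_mul_integral hK hk hpos
    (F := fun x => 1 - exp (-(p * x))) (F' := fun x => p * exp (-(p * x))) (by fun_prop)
    (by fun_prop) (fun x _ => hasDerivAt_one_sub_exp p x)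
    (fun x _ => mul_deriv_one_sub_exp_le p x) (integrable_one_sub_exp_sub_mul hpos hint hp)

theorem IsWeakProfile.laplaceExponent_le_one (hwk : IsWeakProfile ν k)
    (hK : IsNearConstantKernel α ε k) (hk : Measurable fun p : ℝ × ℝ => k p.1 p.2)
    (hpos : ∀ᵐ x ∂ν, 0 < x) (hint : Integrable (fun x => x) ν) (hp : 0 ≤ p) :
    laplaceExponent ν p ≤ 1 := by
  have hf := integrable_one_sub_exp hpos hint hp
  have hR := integrable_one_sub_exp_sub_mul hpos hint hp
  have hsq : laplaceExponent ν p ^ 2 ≤ laplaceExponent ν p := calc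
    _ = ∫ q, (1 - exp (-(p * q.1))) * (1 - exp (-(p * q.2))) ∂ν.prod ν := by
        rw [integral_prod_mul (fun x => 1 - exp (-(p * x))) (fun x => 1 - exp (-(p * x))),
          laplaceExponent, sq]
    _ ≤ ∫ x, (1 - exp (-(p * x)) - x * (p * exp (-(p * x)))) ∂ν :=
        hwk.integral_prod_le_integral hK hk hpos (F := fun x => 1 - exp (-(p * x)))
          (F' := fun x => p * exp (-(p * x))) (by fun_prop) (by fun_prop)
          (fun x _ => hasDerivAt_one_sub_exp p x) (fun x _ => mul_deriv_one_sub_exp_le p x) hR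
          (hf.mul_prod hf) fun y z _ _ => (one_sub_exp_add_sub p y z).ge
    _ ≤ laplaceExponent ν p :=
        integral_mono_ae hR hf (hpos.mono fun x hx => sub_le_self _ (by positivity))
  nlinarith

theorem IsWeakProfile.measure_univ_le_one (hwk : IsWeakProfile ν k)
    (hK : IsNearConstantKernel α ε k) (hk : Measurable fun p : ℝ × ℝ => k p.1 p.2)
    (hpos : ∀ᵐ x ∂ν, 0 < x) (hint : Integrable (fun x => x) ν) : ν univ ≤ 1 := by
  have hlim : ∀ x : ℝ, 0 < x →
      Tendsto (fun p => ENNReal.ofReal (1 - exp (-(p * x)))) atTop (𝓝 1) := fun x hx => by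
    have hexp : Tendsto (fun p => exp (-(p * x))) atTop (𝓝 0) :=
      tendsto_exp_neg_atTop_nhds_zero.comp (tendsto_id.atTop_mul_const hx)
    simpa using ENNReal.tendsto_ofReal (hexp.const_sub 1)
  have hle : ∀ p ≥ (0 : ℝ), ∫⁻ x, ENNReal.ofReal (1 - exp (-(p * x))) ∂ν ≤ 1 := fun p hp => by
    rw [← ofReal_integral_eq_lintegral_ofReal (integrable_one_sub_exp hpos hint hp)
      (hpos.mono fun x hx => one_sub_exp_nonneg (by positivity))]
    exact ENNReal.ofReal_le_one.2 (hwk.laplaceExponent_le_one hK hk hpos hint hp)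
  calc ν univ = ∫⁻ x, liminf (fun p => ENNReal.ofReal (1 - exp (-(p * x)))) atTop ∂ν := by
        rw [← lintegral_one]
        exact lintegral_congr_ae (hpos.mono fun x hx => (hlim x hx).liminf_eq.symm)
    _ ≤ liminf (fun p => ∫⁻ x, ENNReal.ofReal (1 - exp (-(p * x))) ∂ν) atTop :=
        lintegral_liminf_le fun p => by fun_prop
    _ ≤ 1 := liminf_le_of_frequently_le'
        ((eventually_ge_atTop 0).mono hle).frequently

end LaplaceExponent

theorem rpow_one_sub_le_add_mul_div {α m x : ℝ} (hα : α ∈ Icc (0 : ℝ) 1) (hm : 0 < m)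
    (hx : 0 ≤ x) : x ^ (1 - α) ≤ m ^ (1 - α) * (α + (1 - α) * (x / m)) := by
  have h := rpow_one_add_le_one_add_mul_self (s := x / m - 1)
    (by linarith [div_nonneg hx hm.le]) (p := 1 - α) (by linarith [hα.2]) (by linarith [hα.1])
  rw [add_sub_cancel, div_rpow hx hm.le, div_le_iff₀ (by positivity)] at h
  linarith

theorem IsNearConstantKernel.mul_one_sub_exp_mul_le {α ε p y z : ℝ} {k : ℝ → ℝ → ℝ}
    (hK : IsNearConstantKernel α ε k) (hα : α ∈ Icc (0 : ℝ) 1) (hp : 0 < p) (hy : 0 < y)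
    (hz : 0 < z) : k y z * ((1 - exp (-(p * y))) * (1 - exp (-(p * z)))) ≤
      2 * ((1 - exp (-(p * y))) * (1 - exp (-(p * z)))) +
        ε * p ^ (2 - α) * (y * z ^ (1 - α) + y ^ (1 - α) * z) := by
  set f : ℝ → ℝ := fun x => 1 - exp (-(p * x))
  have hε := hK.eps_nonneg
  have hf0 : 0 ≤ f y * f z :=
    mul_nonneg (one_sub_exp_nonneg (by positivity)) (one_sub_exp_nonneg (by positivity))
  have hyz := div_rpow_mul_one_sub_exp_mul_le hα hp hy hz
  have hzy := div_rpow_mul_one_sub_exp_mul_le hα hp hz hy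
  calc k y z * (f y * f z) ≤ (2 + ε * ((y / z) ^ α + (z / y) ^ α)) * (f y * f z) := by
        gcongr
        exact hK.le hy hz
    _ = 2 * (f y * f z) +
        ε * ((y / z) ^ α * (f y * f z) + (z / y) ^ α * (f z * f y)) := by ring
    _ ≤ 2 * (f y * f z) +
        ε * (p ^ (2 - α) * (y * z ^ (1 - α)) + p ^ (2 - α) * (z * y ^ (1 - α))) := by gcongr
    _ = _ := by ring

section MassLowerBound

variable {ν : Measure ℝ} {k : ℝ → ℝ → ℝ} {α ε p : ℝ}

theorem integrable_rpow_one_sub [IsFiniteMeasure ν] (hα : α ∈ Icc (0 : ℝ) 1)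
    (hpos : ∀ᵐ x ∂ν, 0 < x) (hint : Integrable (fun x => x) ν) :
    Integrable (fun x => x ^ (1 - α)) ν := by
  refine ((integrable_const α).add ((hint.div_const 1).const_mul (1 - α))).mono'
    (by fun_prop) (hpos.mono fun x hx => ?_)
  rw [norm_of_nonneg (by positivity)]
  simpa using rpow_one_sub_le_add_mul_div hα one_pos hx.le

theorem integral_rpow_one_sub_le [IsFiniteMeasure ν] (hα : α ∈ Icc (0 : ℝ) 1)
    (hpos : ∀ᵐ x ∂ν, 0 < x) (hint : Integrable (fun x => x) ν) (hν : ν univ ≤ 1)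
    (hM : 0 < ∫ x, x ∂ν) : ∫ x, x ^ (1 - α) ∂ν ≤ (∫ x, x ∂ν) ^ (1 - α) := by
  set M := ∫ x, x ∂ν
  have hν' : ν.real univ ≤ 1 := ENNReal.toReal_le_of_le_ofReal zero_le_one (by simpa using hν)
  have hbound : Integrable (fun x => α + (1 - α) * (x / M)) ν :=
    (integrable_const α).add ((hint.div_const M).const_mul (1 - α))
  calc ∫ x, x ^ (1 - α) ∂ν
      ≤ ∫ x, M ^ (1 - α) * (α + (1 - α) * (x / M)) ∂ν :=
        integral_mono_ae (integrable_rpow_one_sub hα hpos hint) (hbound.const_mul _)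
          (hpos.mono fun x hx => rpow_one_sub_le_add_mul_div hα hM hx.le)
    _ = M ^ (1 - α) * (ν.real univ * α + (1 - α)) := by
        rw [integral_const_mul, integral_add (integrable_const α)
          ((hint.div_const M).const_mul (1 - α)), integral_const, integral_const_mul,
          integral_div, div_self hM.ne', smul_eq_mul, mul_one]
    _ ≤ M ^ (1 - α) * 1 := by
        gcongr
        nlinarith [hα.1]
    _ = M ^ (1 - α) := mul_one _

theorem IsWeakProfile.integral_one_sub_exp_sub_mul_le [IsFiniteMeasure ν]
    (hwk : IsWeakProfile ν k) (hα : α ∈ Icc (0 : ℝ) 1) (hK : IsNearConstantKernel α ε k)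
    (hk : Measurable fun p : ℝ × ℝ => k p.1 p.2) (hpos : ∀ᵐ x ∂ν, 0 < x)
    (hint : Integrable (fun x => x) ν) (hν : ν univ ≤ 1) (hM : 0 < ∫ x, x ∂ν) (hp : 0 < p) :
    ∫ x, (1 - exp (-(p * x)) - x * (p * exp (-(p * x)))) ∂ν ≤
      laplaceExponent ν p ^ 2 + ε * (p ^ (2 - α) * (∫ x, x ∂ν) ^ (2 - α)) := by
  set M := ∫ x, x ∂ν
  set f : ℝ → ℝ := fun x => 1 - exp (-(p * x))
  have hε := hK.eps_nonneg
  obtain ⟨hintk, hid⟩ := hwk.integrable_and_two_mul_integral_one_sub_exp hK hk hpos hint hp.le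
  have hf : Integrable f ν := integrable_one_sub_exp hpos hint hp.le
  have hrpow := integrable_rpow_one_sub hα hpos hint
  have hff : Integrable (fun q : ℝ × ℝ => 2 * (f q.1 * f q.2)) (ν.prod ν) :=
    (hf.mul_prod hf).const_mul 2
  have hxy : Integrable (fun q : ℝ × ℝ => ε * p ^ (2 - α) *
      (q.1 * q.2 ^ (1 - α) + q.1 ^ (1 - α) * q.2)) (ν.prod ν) :=
    ((hint.mul_prod hrpow).add (hrpow.mul_prod hint)).const_mul _
  have htwo : 2 * ∫ x, (1 - exp (-(p * x)) - x * (p * exp (-(p * x)))) ∂ν ≤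
      2 * (laplaceExponent ν p ^ 2 + ε * (p ^ (2 - α) * M ^ (2 - α))) := calc
    _ ≤ ∫ q, (2 * (f q.1 * f q.2) + ε * p ^ (2 - α) *
          (q.1 * q.2 ^ (1 - α) + q.1 ^ (1 - α) * q.2)) ∂ν.prod ν :=
        hid.trans_le (integral_mono_ae hintk (hff.add hxy)
          ((ae_prod_of_ae hpos hpos).mono fun q ⟨hy, hz⟩ => hK.mul_one_sub_exp_mul_le hα hp hy hz))
    _ = 2 * laplaceExponent ν p ^ 2 +
          ε * p ^ (2 - α) * (M * ∫ x, x ^ (1 - α) ∂ν + (∫ x, x ^ (1 - α) ∂ν) * M) := by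
        rw [integral_add hff hxy, integral_const_mul, integral_const_mul,
          integral_add (hint.mul_prod hrpow) (hrpow.mul_prod hint), integral_prod_mul f f,
          integral_prod_mul (fun x => x) (fun x => x ^ (1 - α)),
          integral_prod_mul (fun x => x ^ (1 - α)) (fun x => x), ← sq]
        rfl
    _ ≤ 2 * laplaceExponent ν p ^ 2 +
          ε * p ^ (2 - α) * (M * M ^ (1 - α) + M ^ (1 - α) * M) := by
        gcongr <;> exact integral_rpow_one_sub_le hα hpos hint hν hM
    _ = 2 * (laplaceExponent ν p ^ 2 + ε * (p ^ (2 - α) * M ^ (2 - α))) := by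
        rw [show 2 - α = 1 + (1 - α) by ring, rpow_one_add' hM.le (by linarith [hα.2])]
        ring
  linarith

theorem hasDerivAt_laplaceExponent_div (hpos : ∀ᵐ x ∂ν, 0 < x)
    (hint : Integrable (fun x => x) ν) (hp : 0 < p) :
    HasDerivAt (fun p => laplaceExponent ν p / p)
      (-(∫ x, (1 - exp (-(p * x)) - x * (p * exp (-(p * x)))) ∂ν) / p ^ 2) p := by
  have hbound : ∀ᵐ x ∂ν, ∀ q ∈ Ioi (p / 2),
      ‖x * exp (-(q * x))‖ ≤ x := hpos.mono fun x hx q hq => by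
    have hq : 0 < q := (half_pos hp).trans hq
    rw [norm_of_nonneg (by positivity)]
    exact mul_le_of_le_one_right hx.le (exp_le_one_iff.2 (by nlinarith))
  have hderiv : HasDerivAt (laplaceExponent ν) (∫ x, x * exp (-(p * x)) ∂ν) p := by
    refine (hasDerivAt_integral_of_dominated_loc_of_deriv_le (Ioi_mem_nhds (half_lt_self hp))
      (F := fun q x => 1 - exp (-(q * x))) (F' := fun q x => x * exp (-(q * x)))
      (Eventually.of_forall fun q => by fun_prop) (integrable_one_sub_exp hpos hint hp.le)
      (by fun_prop) hbound hint (ae_of_all _ fun x q _ => ?_)).2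
    simpa only [mul_comm x] using hasDerivAt_one_sub_exp x q
  have hmul : Integrable (fun x => x * exp (-(p * x))) ν :=
    hint.mono' (by fun_prop) (hbound.mono fun x hx => hx p (half_lt_self hp))
  refine (hderiv.div (hasDerivAt_id p) hp.ne').congr_deriv ?_
  rw [show (fun x => 1 - exp (-(p * x)) - x * (p * exp (-(p * x)))) =
      fun x => 1 - exp (-(p * x)) - p * (x * exp (-(p * x))) from funext fun x => by ring,
    integral_sub (integrable_one_sub_exp hpos hint hp.le) (hmul.const_mul p), integral_const_mul]
  simp only [id_eq, laplaceExponent]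
  ring

theorem tendsto_laplaceExponent_div (hpos : ∀ᵐ x ∂ν, 0 < x)
    (hint : Integrable (fun x => x) ν) :
    Tendsto (fun p => laplaceExponent ν p / p) (𝓝[>] 0) (𝓝 (∫ x, x ∂ν)) := by
  simp only [laplaceExponent, ← integral_div]
  refine tendsto_integral_filter_of_dominated_convergence (fun x => x)
    (Eventually.of_forall fun q => by fun_prop) ?_ hint (ae_of_all _ fun x => ?_)
  · filter_upwards [self_mem_nhdsWithin] with p (hp : 0 < p)
    filter_upwards [hpos] with x hx
    rw [norm_of_nonneg (div_nonneg (one_sub_exp_nonneg (by positivity)) hp.le),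
      div_le_iff₀ hp, mul_comm x]
    exact one_sub_exp_le _
  · have hslope := hasDerivAt_iff_tendsto_slope_zero.1 (hasDerivAt_one_sub_exp x 0)
    refine ((hslope.mono_left (nhdsWithin_mono _ fun p hp => ne_of_gt hp)).congr fun p => ?_).trans
      (by simp)
    simp [div_eq_inv_mul, mul_comm]

theorem laplaceExponent_nonneg (hpos : ∀ᵐ x ∂ν, 0 < x) (hp : 0 ≤ p) : 0 ≤ laplaceExponent ν p :=
  integral_nonneg_of_ae (hpos.mono fun x hx => one_sub_exp_nonneg (by positivity))

theorem IsWeakProfile.laplaceExponent_div_riccati [IsFiniteMeasure ν]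
    (hwk : IsWeakProfile ν k) (hα : α ∈ Ico (0 : ℝ) 1) (hK : IsNearConstantKernel α ε k)
    (hk : Measurable fun p : ℝ × ℝ => k p.1 p.2) (hpos : ∀ᵐ x ∂ν, 0 < x)
    (hint : Integrable (fun x => x) ν) (hν : ν univ ≤ 1) (hM : 0 < ∫ x, x ∂ν) {c : ℝ}
    (hc : c = ε * (∫ x, x ∂ν) ^ (2 - α) / (1 - α)) (hp : 0 < p) :
    -(laplaceExponent ν p / p + c * p ^ (1 - α)) ^ 2 ≤
      -(∫ x, (1 - exp (-(p * x)) - x * (p * exp (-(p * x)))) ∂ν) / p ^ 2 +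
        c * ((1 - α) * p ^ (-α)) := by
  have hα1 : 0 < 1 - α := by linarith [hα.2]
  have hε := hK.eps_nonneg
  have hc0 : 0 ≤ c := by
    rw [hc]
    positivity
  have hQ : 0 ≤ laplaceExponent ν p / p := div_nonneg (laplaceExponent_nonneg hpos hp.le) hp.le
  have hR : ∫ x, (1 - exp (-(p * x)) - x * (p * exp (-(p * x)))) ∂ν ≤
      laplaceExponent ν p ^ 2 + c * (1 - α) * (p ^ (-α) * p ^ 2) := by
    refine (hwk.integral_one_sub_exp_sub_mul_le (Ico_subset_Icc_self hα) hK hk hpos hint hν hM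
      hp).trans_eq ?_
    rw [hc, div_mul_cancel₀ _ hα1.ne', ← rpow_natCast p 2, ← rpow_add hp, Nat.cast_ofNat,
      neg_add_eq_sub]
    ring
  calc -(laplaceExponent ν p / p + c * p ^ (1 - α)) ^ 2 ≤ -(laplaceExponent ν p / p) ^ 2 := by
        gcongr
        exact le_add_of_nonneg_right (by positivity)
    _ = -(laplaceExponent ν p ^ 2 + c * (1 - α) * (p ^ (-α) * p ^ 2)) / p ^ 2 +
        c * ((1 - α) * p ^ (-α)) := by
        field_simp
        ring
    _ ≤ _ := by gcongr

theorem IsWeakProfile.le_laplaceExponent [IsFiniteMeasure ν]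
    (hwk : IsWeakProfile ν k) (hα : α ∈ Ico (0 : ℝ) 1) (hε : 0 < ε)
    (hK : IsNearConstantKernel α ε k) (hk : Measurable fun p : ℝ × ℝ => k p.1 p.2)
    (hpos : ∀ᵐ x ∂ν, 0 < x) (hint : Integrable (fun x => x) ν) (hν : ν univ ≤ 1)
    (hM : 0 < ∫ x, x ∂ν) {s : ℝ} (hs : 0 < s) :
    s / (1 + s) - ε * s ^ (2 - α) / (1 - α) ≤ laplaceExponent ν (s / ∫ x, x ∂ν) := by
  set M := ∫ x, x ∂ν
  have hα1 : 0 < 1 - α := by linarith [hα.2]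
  set c := ε * M ^ (2 - α) / (1 - α) with hc
  have : 0 < c := by positivity
  have hderiv : ∀ p, 0 < p → HasDerivAt (fun p => laplaceExponent ν p / p + c * p ^ (1 - α))
      (-(∫ x, (1 - exp (-(p * x)) - x * (p * exp (-(p * x)))) ∂ν) / p ^ 2 +
        c * ((1 - α) * p ^ (-α))) p := fun p hp => by
    refine (hasDerivAt_laplaceExponent_div hpos hint hp).add
      (((hasDerivAt_rpow_const (Or.inl hp.ne')).const_mul c).congr_deriv ?_)
    rw [sub_sub_cancel_left]
  have hlim : Tendsto (fun p => laplaceExponent ν p / p + c * p ^ (1 - α)) (𝓝[>] 0) (𝓝 M) := by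
    have hrpow : Tendsto (fun p : ℝ => p ^ (1 - α)) (𝓝[>] 0) (𝓝 0) :=
      ((continuousAt_rpow_const 0 (1 - α) (Or.inr hα1.le)).tendsto.mono_left
        nhdsWithin_le_nhds).trans (by rw [zero_rpow hα1.ne'])
    simpa using (tendsto_laplaceExponent_div hpos hint).add (hrpow.const_mul c)
  have h := div_one_add_mul_le_of_neg_sq_le_deriv hM (fun p hp => add_pos_of_nonneg_of_pos
    (div_nonneg (laplaceExponent_nonneg hpos hp.le) hp.le) (by positivity)) hderiv
    (fun p hp => hwk.laplaceExponent_div_riccati hα hK hk hpos hint hν hM hc hp) hlim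
    (div_pos hs hM)
  have hP : 0 < s / M := div_pos hs hM
  have hscale : c * (s / M) ^ (1 - α) * (s / M) = ε * s ^ (2 - α) / (1 - α) := by
    rw [mul_assoc, ← rpow_add_one hP.ne', show 1 - α + 1 = 2 - α by ring, div_rpow hs.le hM.le, hc]
    field_simp
  calc s / (1 + s) - ε * s ^ (2 - α) / (1 - α)
      = M / (1 + M * (s / M)) * (s / M) - c * (s / M) ^ (1 - α) * (s / M) := by
        rw [hscale, mul_div_cancel₀ s hM.ne']
        field_simp
    _ ≤ (laplaceExponent ν (s / M) / (s / M) + c * (s / M) ^ (1 - α)) * (s / M) -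
        c * (s / M) ^ (1 - α) * (s / M) := by gcongr
    _ = laplaceExponent ν (s / M) := by
        field_simp
        ring

end MassLowerBound

theorem exists_lt_div_one_add_sub {α : ℝ} (hα : α ∈ Ico (0 : ℝ) 1) :
    ∃ s > 0, ∃ ε > 0, (1 + α) / 2 < s / (1 + s) - ε * s ^ (2 - α) / (1 - α) := by
  have hα1 : 0 < 1 - α := by linarith [hα.2]
  have hα3 : 0 < 3 + α := by linarith [hα.1]
  set s := (3 + α) / (1 - α) with hs_def
  have hs : 0 < s := div_pos hα3 hα1
  refine ⟨s, hs, (1 - α) ^ 2 / (8 * s ^ (2 - α)), by positivity, ?_⟩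
  have hfirst : s / (1 + s) = (3 + α) / 4 := by
    rw [hs_def, show 1 + (3 + α) / (1 - α) = 4 / (1 - α) by field_simp; ring,
      div_div_div_cancel_right₀ hα1.ne']
  have hsecond : (1 - α) ^ 2 / (8 * s ^ (2 - α)) * s ^ (2 - α) / (1 - α) = (1 - α) / 8 := by
    field_simp
  rw [hfirst, hsecond]
  linarith

theorem rpow_neg_add_le {θ P a z : ℝ} (hθ : 0 < θ) (hP : 0 < P) (ha : 0 < a) (hz : 0 < z) :
    (a + z) ^ (-θ) ≤ exp (-(P * z)) * a ^ (-θ) + (P / θ) ^ θ := by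
  have haz : 0 < a + z := add_pos ha hz
  rcases le_or_gt (a + z) (θ / P) with hle | hgt
  · have hlog : P * z / θ ≤ log ((a + z) / a) := calc
      P * z / θ ≤ 1 - ((a + z) / a)⁻¹ := by
          rw [inv_div, one_sub_div haz.ne', add_sub_cancel_left, div_le_div_iff₀ hθ haz]
          nlinarith [(le_div_iff₀ hP).1 hle]
      _ ≤ log ((a + z) / a) := one_sub_inv_le_log_of_pos (by positivity)
    have hratio : ((a + z) / a) ^ (-θ) ≤ exp (-(P * z)) := by
      rw [rpow_def_of_pos (by positivity), exp_le_exp, mul_neg, neg_le_neg_iff]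
      exact (div_le_iff₀ hθ).1 hlog
    refine le_add_of_le_of_nonneg ?_ (by positivity)
    rwa [div_rpow haz.le ha.le, div_le_iff₀ (by positivity)] at hratio
  · refine le_add_of_nonneg_of_le (by positivity) ?_
    calc (a + z) ^ (-θ) ≤ (θ / P) ^ (-θ) :=
          rpow_le_rpow_of_nonpos (by positivity) hgt.le (by linarith)
      _ = (P / θ) ^ θ := by rw [rpow_neg (by positivity), ← inv_rpow (by positivity), inv_div]

section NegativeMoment

variable {θ η P : ℝ}

theorem hasDerivAt_mul_add_rpow_neg (θ : ℝ) (hη : 0 < η) {x : ℝ} (hx : 0 < x) :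
    HasDerivAt (fun x => x * (x + η) ^ (-θ))
      ((x + η) ^ (-θ) - θ * (x * (x + η) ^ (-θ - 1))) x := by
  have hpow : HasDerivAt (fun x : ℝ => (x + η) ^ (-θ)) (-θ * (x + η) ^ (-θ - 1) * 1) x :=
    (hasDerivAt_rpow_const (Or.inl (by positivity))).comp x ((hasDerivAt_id x).add_const η)
  refine ((hasDerivAt_id x).mul hpow).congr_deriv ?_
  simp only [id_eq]
  ring

theorem mul_add_rpow_neg_sub_mul_deriv_mem_Icc (hθ : 0 ≤ θ) (hη : 0 ≤ η) {x : ℝ} (hx : 0 < x) :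
    x * (x + η) ^ (-θ) - x * ((x + η) ^ (-θ) - θ * (x * (x + η) ^ (-θ - 1))) ∈
      Icc 0 (θ * (x * (x + η) ^ (-θ))) := by
  rw [← mul_sub, sub_sub_cancel, rpow_sub_one (by positivity), mul_left_comm]
  have hle : x * ((x + η) ^ (-θ) / (x + η)) ≤ (x + η) ^ (-θ) := by
    rw [mul_div_left_comm]
    exact mul_le_of_le_one_right (by positivity) ((div_le_one (by positivity)).2 (by linarith))
  exact ⟨by positivity, by gcongr⟩

theorem mul_add_rpow_neg_add_le (hθ : 0 < θ) (hη : 0 ≤ η) (hP : 0 < P) {y z : ℝ} (hy : 0 < y)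
    (hz : 0 < z) :
    (1 - exp (-(P * z))) * (y * (y + η) ^ (-θ)) + (1 - exp (-(P * y))) * (z * (z + η) ^ (-θ)) -
        (P / θ) ^ θ * (y + z) ≤
      y * (y + η) ^ (-θ) + z * (z + η) ^ (-θ) - (y + z) * (y + z + η) ^ (-θ) := by
  have hyz : (y + z + η) ^ (-θ) ≤ exp (-(P * z)) * (y + η) ^ (-θ) + (P / θ) ^ θ := by
    simpa only [add_right_comm] using rpow_neg_add_le hθ hP (a := y + η) (by positivity) hz
  have hzy : (y + z + η) ^ (-θ) ≤ exp (-(P * y)) * (z + η) ^ (-θ) + (P / θ) ^ θ := by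
    simpa only [add_comm z y, add_right_comm z η y] using
      rpow_neg_add_le hθ hP (a := z + η) (by positivity) hy
  linarith [mul_le_mul_of_nonneg_left hyz hy.le, mul_le_mul_of_nonneg_left hzy hz.le]

variable {ν : Measure ℝ} {k : ℝ → ℝ → ℝ} {α ε : ℝ}

theorem integrable_mul_add_rpow_neg (hpos : ∀ᵐ x ∂ν, 0 < x) (hint : Integrable (fun x => x) ν)
    (hθ : 0 ≤ θ) (hη : 0 < η) : Integrable (fun x => x * (x + η) ^ (-θ)) ν := by
  refine (hint.mul_const (η ^ (-θ))).mono' (by fun_prop) (hpos.mono fun x hx => ?_)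
  rw [norm_of_nonneg (by positivity)]
  gcongr ?_ * ?_
  exact rpow_le_rpow_of_nonpos hη (by linarith) (by linarith)

theorem integrable_prod_mul_add_mul_sub [IsFiniteMeasure ν] {E F : ℝ → ℝ} (hE : Integrable E ν)
    (hF : Integrable F ν) (hint : Integrable (fun x => x) ν) (c : ℝ) :
    Integrable (fun q : ℝ × ℝ => E q.2 * F q.1 + E q.1 * F q.2 - c * (q.1 + q.2)) (ν.prod ν) := by
  have hFE : Integrable (fun q : ℝ × ℝ => E q.2 * F q.1) (ν.prod ν) := by
    simpa only [mul_comm] using hF.mul_prod hE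
  exact (hFE.add (hE.mul_prod hF)).sub (((hint.comp_fst ν).add (hint.comp_snd ν)).const_mul c)

theorem integral_prod_mul_add_mul_sub [IsFiniteMeasure ν] {E F : ℝ → ℝ} (hE : Integrable E ν)
    (hF : Integrable F ν) (hint : Integrable (fun x => x) ν) (c : ℝ) :
    ∫ q, (E q.2 * F q.1 + E q.1 * F q.2 - c * (q.1 + q.2)) ∂ν.prod ν =
      2 * ((∫ x, E x ∂ν) * ∫ x, F x ∂ν) - c * (2 * (ν.real univ * ∫ x, x ∂ν)) := by
  have hEF : Integrable (fun q : ℝ × ℝ => E q.1 * F q.2) (ν.prod ν) := hE.mul_prod hF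
  have hFE : Integrable (fun q : ℝ × ℝ => F q.1 * E q.2) (ν.prod ν) := hF.mul_prod hE
  have hfst : Integrable (fun q : ℝ × ℝ => q.1) (ν.prod ν) := hint.comp_fst ν
  have hsnd : Integrable (fun q : ℝ × ℝ => q.2) (ν.prod ν) := hint.comp_snd ν
  have hprod : Integrable (fun q : ℝ × ℝ => F q.1 * E q.2 + E q.1 * F q.2) (ν.prod ν) :=
    hFE.add hEF
  have hsum : Integrable (fun q : ℝ × ℝ => c * (q.1 + q.2)) (ν.prod ν) :=
    (hfst.add hsnd).const_mul c
  simp only [mul_comm (E (Prod.snd _))]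
  rw [integral_sub hprod hsum, integral_add hFE hEF, integral_const_mul, integral_add hfst hsnd,
    integral_fun_fst (fun x : ℝ => x), integral_fun_snd (fun x : ℝ => x), integral_prod_mul E F,
    integral_prod_mul F E]
  simp only [smul_eq_mul]
  ring

theorem IsWeakProfile.integral_mul_add_rpow_neg_le [IsFiniteMeasure ν] (hwk : IsWeakProfile ν k)
    (hK : IsNearConstantKernel α ε k) (hk : Measurable fun p : ℝ × ℝ => k p.1 p.2)
    (hpos : ∀ᵐ x ∂ν, 0 < x) (hint : Integrable (fun x => x) ν) (hθ : 0 < θ) (hη : 0 < η)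
    (hP : 0 < P) :
    (2 * laplaceExponent ν P - θ) * ∫ x, x * (x + η) ^ (-θ) ∂ν ≤
      (P / θ) ^ θ * (2 * (ν.real univ * ∫ x, x ∂ν)) := by
  set F : ℝ → ℝ := fun x => x * (x + η) ^ (-θ)
  set F' : ℝ → ℝ := fun x => (x + η) ^ (-θ) - θ * (x * (x + η) ^ (-θ - 1))
  set E : ℝ → ℝ := fun x => 1 - exp (-(P * x))
  have hF : Integrable F ν := integrable_mul_add_rpow_neg hpos hint hθ.le hη
  have hE : Integrable E ν := integrable_one_sub_exp hpos hint hP.le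
  have hsub : ∀ x, 0 < x → F x - x * F' x ∈ Icc 0 (θ * F x) := fun x hx =>
    mul_add_rpow_neg_sub_mul_deriv_mem_Icc hθ.le hη.le hx
  have hR : Integrable (fun x => F x - x * F' x) ν :=
    (hF.const_mul θ).mono' (by fun_prop) (hpos.mono fun x hx => by
      rw [norm_of_nonneg (hsub x hx).1]
      exact (hsub x hx).2)
  have hmain : 2 * (laplaceExponent ν P * ∫ x, F x ∂ν) -
      (P / θ) ^ θ * (2 * (ν.real univ * ∫ x, x ∂ν)) ≤ θ * ∫ x, F x ∂ν := calc
    _ = ∫ q, (E q.2 * F q.1 + E q.1 * F q.2 - (P / θ) ^ θ * (q.1 + q.2)) ∂ν.prod ν :=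
        (integral_prod_mul_add_mul_sub hE hF hint _).symm
    _ ≤ ∫ x, (F x - x * F' x) ∂ν :=
        hwk.integral_prod_le_integral hK hk hpos (by fun_prop) (by fun_prop)
          (fun x hx => hasDerivAt_mul_add_rpow_neg θ hη hx)
          (fun x hx => sub_nonneg.1 (hsub x hx).1) hR (integrable_prod_mul_add_mul_sub hE hF hint _)
          fun y z hy hz => mul_add_rpow_neg_add_le hθ hη.le hP hy hz
    _ ≤ ∫ x, θ * F x ∂ν := integral_mono_ae hR (hF.const_mul θ)
          (hpos.mono fun x hx => (hsub x hx).2)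
    _ = θ * ∫ x, F x ∂ν := integral_const_mul _ _
  linarith

theorem IsWeakProfile.integrable_rpow_one_sub [IsFiniteMeasure ν] (hwk : IsWeakProfile ν k)
    (hK : IsNearConstantKernel α ε k) (hk : Measurable fun p : ℝ × ℝ => k p.1 p.2)
    (hpos : ∀ᵐ x ∂ν, 0 < x) (hint : Integrable (fun x => x) ν) (hθ : 0 < θ) (hP : 0 < P)
    (hQ : θ / 2 < laplaceExponent ν P) : Integrable (fun x => x ^ (1 - θ)) ν := by
  set B := (P / θ) ^ θ * (2 * (ν.real univ * ∫ x, x ∂ν)) / (2 * laplaceExponent ν P - θ)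
  have hlim : ∀ x : ℝ, 0 < x → Tendsto (fun η => ENNReal.ofReal (x * (x + η) ^ (-θ)))
      (𝓝[>] (0 : ℝ)) (𝓝 (ENNReal.ofReal (x ^ (1 - θ)))) := fun x hx => by
    have hcont : ContinuousAt (fun η => x * (x + η) ^ (-θ)) 0 :=
      continuousAt_const.mul ((continuousAt_const.add continuousAt_id).rpow_const
        (Or.inl (by simpa using hx.ne')))
    refine ENNReal.tendsto_ofReal ((hcont.tendsto.mono_left nhdsWithin_le_nhds).trans_eq ?_)
    rw [add_zero, sub_eq_add_neg, rpow_add hx, rpow_one]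
  have hle : ∀ᶠ η in 𝓝[>] (0 : ℝ),
      ∫⁻ x, ENNReal.ofReal (x * (x + η) ^ (-θ)) ∂ν ≤ ENNReal.ofReal B :=
    eventually_nhdsWithin_of_forall fun η (hη : 0 < η) => by
      rw [← ofReal_integral_eq_lintegral_ofReal (integrable_mul_add_rpow_neg hpos hint hθ.le hη)
        (hpos.mono fun x hx => by positivity)]
      refine ENNReal.ofReal_le_ofReal ((le_div_iff₀' (by linarith)).2 ?_)
      exact hwk.integral_mul_add_rpow_neg_le hK hk hpos hint hθ hη hP
  refine ⟨by fun_prop, ?_⟩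
  rw [hasFiniteIntegral_iff_ofReal (hpos.mono fun x hx => by positivity)]
  calc ∫⁻ x, ENNReal.ofReal (x ^ (1 - θ)) ∂ν
      = ∫⁻ x, liminf (fun η => ENNReal.ofReal (x * (x + η) ^ (-θ))) (𝓝[>] (0 : ℝ)) ∂ν :=
        lintegral_congr_ae (hpos.mono fun x hx => (hlim x hx).liminf_eq.symm)
    _ ≤ liminf (fun η => ∫⁻ x, ENNReal.ofReal (x * (x + η) ^ (-θ)) ∂ν) (𝓝[>] (0 : ℝ)) :=
        lintegral_liminf_le fun η => by fun_prop
    _ ≤ ENNReal.ofReal B := liminf_le_of_frequently_le' hle.frequently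
    _ < ∞ := ENNReal.ofReal_lt_top

end NegativeMoment

theorem exists_forall_integrable_rpow_neg {α : ℝ} (hα : α ∈ Ico (0 : ℝ) 1) :
    ∃ ε > 0, ∀ (k : ℝ → ℝ → ℝ) (ν : Measure ℝ) [SFinite ν], IsNearConstantKernel α ε k →
      (Measurable fun p : ℝ × ℝ => k p.1 p.2) → IsWeakProfile ν k → (∀ᵐ x ∂ν, 0 < x) →
      Integrable (fun x => x) ν → Integrable (fun x => x ^ (-α)) ν := by
  obtain ⟨s, hs, ε, hε, hlt⟩ := exists_lt_div_one_add_sub hα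
  refine ⟨ε, hε, fun k ν _ hK hk hwk hpos hint => ?_⟩
  have hν := hwk.measure_univ_le_one hK hk hpos hint
  have : IsFiniteMeasure ν := ⟨hν.trans_lt ENNReal.one_lt_top⟩
  have hM0 : 0 ≤ ∫ x, x ∂ν := integral_nonneg_of_ae (hpos.mono fun x hx => hx.le)
  rcases hM0.eq_or_lt with hM | hM
  · have hzero := (integral_eq_zero_iff_of_nonneg_ae (hpos.mono fun x hx => hx.le) hint).1 hM.symm
    have hbot : ae ν = ⊥ := eventually_false_iff_eq_bot.1
      ((hpos.and hzero).mono fun x hx => hx.1.ne' hx.2)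
    rw [ae_eq_bot.1 hbot]
    exact integrable_zero_measure
  · simpa using hwk.integrable_rpow_one_sub hK hk hpos hint (by linarith [hα.1]) (div_pos hs hM)
      (hlt.trans_le (hwk.le_laplaceExponent hα hε hK hk hpos hint hν hM hs))

/-! ### Gain and loss of mass -/

/-- The density of the size distribution predicted by the profile equation `x² dν(x) = flux(x) dx`;
it serves as a distinguished representative of the density of `ν`. -/
noncomputable def fluxDensity (ν : Measure ℝ) (k : ℝ → ℝ → ℝ) : ℝ → ℝ≥0∞ :=
  (Ioi 0).indicator fun x => flux ν k x / ENNReal.ofReal (x ^ 2)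

/-- The rate at which particles of size `y` lose their mass to larger sizes, when `ν` has
density `ρ`. -/
noncomputable def lossDensity (ν : Measure ℝ) (ρ : ℝ → ℝ≥0∞) (k : ℝ → ℝ → ℝ) (y : ℝ) : ℝ≥0∞ :=
  ρ y * ∫⁻ z, ENNReal.ofReal (y * k y z) ∂ν

/-- The rate at which mass appears at size `s` by mergers of sizes `y` and `s - y`, when `ν` has
density `ρ`. Restricting to `y < s - y` counts every merger once and keeps the argument of `ρ` away
from `0`. -/
noncomputable def gainDensity (ν : Measure ℝ) (ρ : ℝ → ℝ≥0∞) (k : ℝ → ℝ → ℝ) (s : ℝ) : ℝ≥0∞ :=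
  ∫⁻ y in Iio (s / 2), ρ (s - y) * ENNReal.ofReal (s * k y (s - y)) ∂ν

section Density

variable {ν : Measure ℝ} {ρ : ℝ → ℝ≥0∞} {k : ℝ → ℝ → ℝ} {α ε : ℝ}

theorem flux_add_coagMeasure_setOf_add_le (hpos : ∀ᵐ x ∂ν, 0 < x) (t : ℝ) :
    flux ν k t + coagMeasure ν k {p | p.1 + p.2 ≤ t} = coagMeasure ν k {p | p.1 < t} := by
  have hs : MeasurableSet {p : ℝ × ℝ | p.1 + p.2 ≤ t} :=
    measurableSet_le (by fun_prop) measurable_const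
  rw [flux, ← measure_inter_add_sdiff {p : ℝ × ℝ | p.1 < t} hs, add_comm]
  congr 1
  · refine measure_congr ((ae_coagMeasure_pos hpos).mono fun p hp => propext ?_)
    exact ⟨fun h => ⟨(lt_add_of_pos_right _ hp.2).trans_le h, h⟩, fun h => h.2⟩
  · congr 1
    ext p
    simp

variable [SFinite ν]

theorem measurable_fluxDensity : Measurable (fluxDensity ν k) :=
  (measurable_flux.div (by fun_prop)).indicator measurableSet_Ioi

theorem IsWeakProfile.eq_withDensity_fluxDensity (hwk : IsWeakProfile ν k)
    (hpos : ∀ᵐ x ∂ν, 0 < x) : ν = volume.withDensity (fluxDensity ν k) := by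
  ext s hs
  set h : ℝ → ℝ≥0∞ := s.indicator fun x => (ENNReal.ofReal (x ^ 2))⁻¹
  have hh : Measurable h := Measurable.indicator (by fun_prop) hs
  calc ν s = ∫⁻ x, ENNReal.ofReal (x ^ 2) * h x ∂ν := by
        rw [← lintegral_indicator_one hs]
        refine lintegral_congr_ae (hpos.mono fun x hx => ?_)
        have hx2 : ENNReal.ofReal (x ^ 2) ≠ 0 := (ENNReal.ofReal_pos.2 (pow_pos hx 2)).ne'
        by_cases hxs : x ∈ s
        · simp only [h, indicator_of_mem hxs, Pi.one_apply,
            ENNReal.mul_inv_cancel hx2 ENNReal.ofReal_ne_top]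
        · simp only [h, indicator_of_notMem hxs, mul_zero]
    _ = ∫⁻ p, (∫⁻ x in Ioo p.1 (p.1 + p.2) ∩ Ioi 0, h x) ∂coagMeasure ν k := by
        refine (hwk h hh).trans
          (lintegral_congr_ae ((ae_coagMeasure_pos hpos).mono fun p hp => ?_))
        have hsubset : Ioo p.1 (p.1 + p.2) ⊆ Ioi 0 := fun x hx => hp.1.trans hx.1
        simp only [inter_eq_left.2 hsubset]
    _ = ∫⁻ x in Ioi 0, h x * flux ν k x := (setLIntegral_mul_flux hh _).symm
    _ = volume.withDensity (fluxDensity ν k) s := by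
        rw [withDensity_apply _ hs, ← lintegral_indicator hs,
          ← lintegral_indicator measurableSet_Ioi]
        refine lintegral_congr fun x => ?_
        by_cases hxs : x ∈ s <;> by_cases hx : x ∈ Ioi 0 <;>
          simp only [h, fluxDensity, hxs, hx, indicator_of_mem, indicator_of_notMem,
            not_false_eq_true, zero_mul, ENNReal.div_eq_inv_mul]

theorem coagMeasure_setOf_fst_lt (hρ : Measurable ρ) (hν : ν = volume.withDensity ρ)
    (hk : Measurable fun p : ℝ × ℝ => k p.1 p.2) (hpos : ∀ᵐ x ∂ν, 0 < x) (t : ℝ) :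
    coagMeasure ν k {p | p.1 < t} = ∫⁻ y in Ioc 0 t, lossDensity ν ρ k y := by
  have hH : Measurable fun y => ∫⁻ z, ENNReal.ofReal (y * k y z) ∂ν :=
    Measurable.lintegral_prod_right' (f := fun p : ℝ × ℝ => ENNReal.ofReal (p.1 * k p.1 p.2))
      (by fun_prop)
  calc coagMeasure ν k {p | p.1 < t} = coagMeasure ν k (Ioo 0 t ×ˢ univ) :=
        measure_congr ((ae_coagMeasure_pos hpos).mono fun p hp =>
          propext ⟨fun h => ⟨⟨hp.1, h⟩, mem_univ _⟩, fun h => h.1.2⟩)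
    _ = ∫⁻ y in Ioo 0 t, ∫⁻ z, ENNReal.ofReal (y * k y z) ∂ν ∂ν := by
        rw [coagMeasure, withDensity_apply _ (measurableSet_Ioo.prod .univ),
          ← Measure.prod_restrict, Measure.restrict_univ, lintegral_prod _ (by fun_prop)]
    _ = ∫⁻ y in Ioo 0 t, ∫⁻ z, ENNReal.ofReal (y * k y z) ∂ν ∂volume.withDensity ρ := by rw [← hν]
    _ = ∫⁻ y in Ioc 0 t, lossDensity ν ρ k y := by
        rw [setLIntegral_withDensity_eq_setLIntegral_mul _ hρ hH measurableSet_Ioo,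
          Measure.restrict_congr_set Ioo_ae_eq_Ioc]
        rfl

theorem coagMeasure_setOf_add_le_eq_setLIntegral_prod [NullSingletonClass ν]
    (hK : IsNearConstantKernel α ε k) (hk : Measurable fun p : ℝ × ℝ => k p.1 p.2)
    (hpos : ∀ᵐ x ∂ν, 0 < x) (t : ℝ) :
    coagMeasure ν k {p | p.1 + p.2 ≤ t} = ∫⁻ p in {p | p.1 < p.2},
      {p : ℝ × ℝ | p.1 + p.2 ≤ t}.indicator
        (fun p => ENNReal.ofReal ((p.1 + p.2) * k p.1 p.2)) p ∂ν.prod ν := by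
  have hs : MeasurableSet {p : ℝ × ℝ | p.1 + p.2 ≤ t} :=
    measurableSet_le (by fun_prop) measurable_const
  set g : ℝ × ℝ → ℝ≥0∞ := {p : ℝ × ℝ | p.1 + p.2 ≤ t}.indicator
    fun p => ENNReal.ofReal (p.1 * k p.1 p.2)
  have hg : Measurable g := Measurable.indicator (by fun_prop) hs
  calc coagMeasure ν k {p | p.1 + p.2 ≤ t} = ∫⁻ p, g p ∂ν.prod ν := by
        rw [coagMeasure, withDensity_apply _ hs, lintegral_indicator hs]
    _ = ∫⁻ p in {p | p.1 < p.2}, (g p + g p.swap) ∂ν.prod ν :=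
        lintegral_prod_self_eq_setLIntegral_add_swap ν hg
    _ = _ := by
        refine lintegral_congr_ae (ae_restrict_of_ae ?_)
        filter_upwards [ae_prod_of_ae hpos hpos] with p hp
        have hk0 := hK.nonneg hp.1 hp.2
        by_cases hpt : p.1 + p.2 ≤ t
        · simp only [g, indicator, mem_ofPred_eq, Prod.fst_swap, Prod.snd_swap, add_comm p.2, hpt,
            if_true, hK.symm hp.2 hp.1, add_mul,
            ENNReal.ofReal_add (mul_nonneg hp.1.le hk0) (mul_nonneg hp.2.le hk0)]
        · simp only [g, indicator, mem_ofPred_eq, Prod.fst_swap, Prod.snd_swap, add_comm p.2, hpt,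
            if_false, add_zero]

theorem coagMeasure_setOf_add_le (hρ : Measurable ρ) (hν : ν = volume.withDensity ρ)
    (hK : IsNearConstantKernel α ε k) (hk : Measurable fun p : ℝ × ℝ => k p.1 p.2)
    (hpos : ∀ᵐ x ∂ν, 0 < x) (t : ℝ) :
    coagMeasure ν k {p | p.1 + p.2 ≤ t} = ∫⁻ s in Ioc 0 t, gainDensity ν ρ k s := by
  have : NullSingletonClass ν := hν ▸ inferInstance
  set h : ℝ × ℝ → ℝ≥0∞ := {p : ℝ × ℝ | p.1 + p.2 ≤ t}.indicator
    fun p => ENNReal.ofReal ((p.1 + p.2) * k p.1 p.2)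
  have hh : Measurable h :=
    Measurable.indicator (by fun_prop) (measurableSet_le (by fun_prop) measurable_const)
  calc coagMeasure ν k {p | p.1 + p.2 ≤ t} = ∫⁻ p in {p | p.1 < p.2}, h p ∂ν.prod ν :=
        coagMeasure_setOf_add_le_eq_setLIntegral_prod hK hk hpos t
    _ = ∫⁻ s, ∫⁻ y in Iio (s / 2), ρ (s - y) * h (y, s - y) ∂ν := by
        rw [← setLIntegral_prod_withDensity_fst_lt_snd ν hρ hh, ← hν]
    _ = ∫⁻ s in Ioc 0 t, gainDensity ν ρ k s := by
        rw [← lintegral_indicator measurableSet_Ioc]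
        refine lintegral_congr fun s => ?_
        have hsum (y : ℝ) : y + (s - y) = s := add_sub_cancel _ _
        simp only [h, indicator, mem_ofPred_eq, hsum, mem_Ioc]
        by_cases hst : s ≤ t
        · by_cases hs0 : 0 < s
          · simp only [hst, hs0, and_self, if_true, gainDensity]
          · have hnull : ν (Iio (s / 2)) = 0 :=
              measure_mono_null (fun y (hy : y < s / 2) => by
                simp only [mem_compl_iff, mem_ofPred_eq]; linarith) hpos
            simp only [hs0, false_and, if_false, setLIntegral_measure_zero _ _ hnull]
        · simp only [hst, and_false, if_false, mul_zero, lintegral_zero]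

end Density

section Differentiable

variable {ν : Measure ℝ} {ρ : ℝ → ℝ≥0∞} {k : ℝ → ℝ → ℝ} {α ε : ℝ}

theorem measurable_lossDensity [SFinite ν] (hρ : Measurable ρ)
    (hk : Measurable fun p : ℝ × ℝ => k p.1 p.2) : Measurable (lossDensity ν ρ k) :=
  hρ.mul (Measurable.lintegral_prod_right' (f := fun p : ℝ × ℝ => ENNReal.ofReal (p.1 * k p.1 p.2))
    (by fun_prop))

theorem gainDensity_eq_lintegral_indicator (s : ℝ) : gainDensity ν ρ k s =
    ∫⁻ y, (Iio (s / 2)).indicator (fun y => ρ (s - y) * ENNReal.ofReal (s * k y (s - y))) y ∂ν :=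
  (lintegral_indicator measurableSet_Iio _).symm

theorem measurable_gainDensity [SFinite ν] (hρ : Measurable ρ)
    (hk : Measurable fun p : ℝ × ℝ => k p.1 p.2) : Measurable (gainDensity ν ρ k) := by
  have hF : Measurable fun p : ℝ × ℝ => ρ (p.1 - p.2) * ENNReal.ofReal (p.1 * k p.2 (p.1 - p.2)) :=
    (hρ.comp (by fun_prop)).mul
      (measurable_fst.mul (hk.comp (by fun_prop : Measurable fun p : ℝ × ℝ =>
        (p.2, p.1 - p.2)))).ennreal_ofReal
  have hs : MeasurableSet {p : ℝ × ℝ | p.2 < p.1 / 2} :=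
    measurableSet_lt (by fun_prop) (by fun_prop)
  rw [show gainDensity ν ρ k = _ from funext gainDensity_eq_lintegral_indicator]
  exact (hF.indicator hs).lintegral_prod_right'

section FiniteMoments

variable (hα : α ∈ Ico (0 : ℝ) 1) (hK : IsNearConstantKernel α ε k)
  (hpos : ∀ᵐ x ∂ν, 0 < x) (hm : Integrable (fun z => 1 + z + z ^ (-α)) ν)

include hα hK hpos hm

theorem coagMeasure_setOf_fst_lt_ne_top [IsFiniteMeasure ν]
    (hk : Measurable fun p : ℝ × ℝ => k p.1 p.2) (t : ℝ) :
    coagMeasure ν k {p | p.1 < t} ≠ ∞ := by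
  obtain ⟨C, -, hC⟩ := hK.exists_mul_le hα t
  have hbound : coagMeasure ν k {p | p.1 < t} ≤
      ∫⁻ _, ∫⁻ z, ENNReal.ofReal (C * (1 + z + z ^ (-α))) ∂ν ∂ν := by
    rw [coagMeasure_apply hk (measurableSet_lt measurable_fst measurable_const)]
    refine lintegral_mono_ae (hpos.mono fun y hy => ?_)
    by_cases hyt : y < t
    · refine (setLIntegral_le_lintegral _ _).trans (lintegral_mono_ae (hpos.mono fun z hz => ?_))
      exact ENNReal.ofReal_le_ofReal (hC y ⟨hy, hyt.le⟩ z hz)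
    · simp only [preimage_ofPred_eq, hyt, ofPred_false, Measure.restrict_empty,
        lintegral_zero_measure, zero_le]
  refine ne_top_of_le_ne_top ?_ hbound
  rw [lintegral_const]
  exact ENNReal.mul_ne_top (hm.const_mul C).lintegral_lt_top.ne (measure_ne_top _ _)

theorem continuousAt_lintegral_ofReal_mul (hk : Measurable fun p : ℝ × ℝ => k p.1 p.2) {y : ℝ}
    (hy : 0 < y) : ContinuousAt (fun y => ∫⁻ z, ENNReal.ofReal (y * k y z) ∂ν) y := by
  obtain ⟨C, -, hC⟩ := hK.exists_mul_le hα (2 * y)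
  refine tendsto_lintegral_filter_of_dominated_convergence
    (fun z => ENNReal.ofReal (C * (1 + z + z ^ (-α)))) (Eventually.of_forall fun y => by fun_prop)
    ?_ (hm.const_mul C).lintegral_lt_top.ne ?_
  · filter_upwards [Ioo_mem_nhds hy (by linarith : y < 2 * y)] with y' hy'
    exact hpos.mono fun z hz => ENNReal.ofReal_le_ofReal (hC y' ⟨hy'.1, hy'.2.le⟩ z hz)
  · refine hpos.mono fun z hz => (ENNReal.continuous_ofReal.tendsto _).comp ?_
    exact continuousAt_id.mul ((hK.continuousAt hy hz).comp₂ continuousAt_id continuousAt_const)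

theorem lintegral_ofReal_mul_ne_top {y : ℝ} (hy : 0 < y) :
    ∫⁻ z, ENNReal.ofReal (y * k y z) ∂ν ≠ ∞ := by
  obtain ⟨C, -, hC⟩ := hK.exists_mul_le hα y
  exact ne_top_of_le_ne_top (hm.const_mul C).lintegral_lt_top.ne (lintegral_mono_ae
    (hpos.mono fun z hz => ENNReal.ofReal_le_ofReal (hC y ⟨hy, le_rfl⟩ z hz)))

theorem continuousAt_lossDensity (hk : Measurable fun p : ℝ × ℝ => k p.1 p.2) {y : ℝ}
    (hy : 0 < y) (hcont : ContinuousAt ρ y) (hρy : ρ y ≠ ∞) :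
    ContinuousAt (lossDensity ν ρ k) y :=
  ENNReal.Tendsto.mul hcont (.inr (lintegral_ofReal_mul_ne_top hα hK hpos hm hy))
    (continuousAt_lintegral_ofReal_mul hα hK hpos hm hk hy) (.inr hρy)

end FiniteMoments

theorem exists_gainDensity_integrand_le (hα : α ∈ Ico (0 : ℝ) 1)
    (hK : IsNearConstantKernel α ε k) (hcont : ContinuousOn ρ (Ioi 0))
    (hfin : ∀ x > 0, ρ x ≠ ∞) {r : ℝ} (hr : 0 < r) :
    ∃ C : ℝ≥0∞, C ≠ ∞ ∧ ∀ s ∈ Ioo (r / 2) (2 * r), ∀ y, 0 < y →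
      (Iio (s / 2)).indicator (fun y => ρ (s - y) * ENNReal.ofReal (s * k y (s - y))) y ≤
        C * ENNReal.ofReal (1 + y + y ^ (-α)) := by
  obtain ⟨C, hC0, hC⟩ := hK.exists_mul_le hα (2 * r)
  obtain ⟨m, hm, hmax⟩ := isCompact_Icc.exists_isMaxOn
    (nonempty_Icc.2 (by linarith : r / 4 ≤ 2 * r))
    (hcont.mono fun x hx => (by linarith [hx.1] : 0 < x))
  have hm0 : 0 < m := by linarith [hm.1]
  refine ⟨ρ m * ENNReal.ofReal (2 * C), ENNReal.mul_ne_top (hfin m hm0) ENNReal.ofReal_ne_top,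
    fun s hs y hy => ?_⟩
  by_cases hys : y < s / 2
  · have hsy : s - y ∈ Icc (r / 4) (2 * r) := ⟨by linarith [hs.1], by linarith [hs.2]⟩
    have hsy0 : 0 < s - y := by linarith
    rw [indicator_of_mem (mem_Iio.2 hys), mul_assoc, ← ENNReal.ofReal_mul (by positivity)]
    refine mul_le_mul' (hmax hsy) (ENNReal.ofReal_le_ofReal ?_)
    calc s * k y (s - y) ≤ 2 * (s - y) * k (s - y) y := by
          rw [hK.symm hy hsy0]
          gcongr
          exacts [hK.nonneg hsy0 hy, by linarith]
      _ ≤ 2 * C * (1 + y + y ^ (-α)) := by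
          rw [mul_assoc, mul_assoc]
          exact mul_le_mul_of_nonneg_left (hC _ ⟨hsy0, hsy.2⟩ y hy) zero_le_two
  · exact (indicator_of_notMem (mt mem_Iio.1 hys) _).trans_le zero_le

theorem continuousAt_gainDensity_integrand (hK : IsNearConstantKernel α ε k)
    (hcont : ContinuousOn ρ (Ioi 0)) (hfin : ∀ x > 0, ρ x ≠ ∞) {s y : ℝ} (hy : 0 < y)
    (hys : y ≠ s / 2) : ContinuousAt (fun s =>
      (Iio (s / 2)).indicator (fun y => ρ (s - y) * ENNReal.ofReal (s * k y (s - y))) y) s := by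
  rcases lt_or_gt_of_ne hys with hlt | hgt
  · have hsy : 0 < s - y := by linarith
    have hsub : ContinuousAt (fun t => t - y) s := by fun_prop
    have hkernel : ContinuousAt (fun t => t * k y (t - y)) s :=
      continuousAt_id.mul ((hK.continuousAt hy hsy).comp₂ continuousAt_const hsub)
    have hlim : ContinuousAt (fun t => ρ (t - y) * ENNReal.ofReal (t * k y (t - y))) s :=
      ENNReal.Tendsto.mul
        (ContinuousAt.comp (f := fun t => t - y) (hcont.continuousAt (Ioi_mem_nhds hsy)) hsub)
        (.inr ENNReal.ofReal_ne_top) ((ENNReal.continuous_ofReal.tendsto _).comp hkernel)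
        (.inr (hfin _ hsy))
    refine hlim.congr ?_
    filter_upwards [Ioi_mem_nhds (by linarith : 2 * y < s)] with t (ht : 2 * y < t)
    rw [indicator_of_mem (mem_Iio.2 (by linarith : y < t / 2))]
  · refine (continuousAt_const (y := (0 : ℝ≥0∞))).congr ?_
    filter_upwards [Iio_mem_nhds (by linarith : s < 2 * y)] with t (ht : t < 2 * y)
    rw [indicator_of_notMem (notMem_Iio.2 (by linarith : t / 2 ≤ y))]

section Gain

variable (hα : α ∈ Ico (0 : ℝ) 1) (hK : IsNearConstantKernel α ε k) (hpos : ∀ᵐ x ∂ν, 0 < x)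
  (hm : Integrable (fun z => 1 + z + z ^ (-α)) ν) (hcont : ContinuousOn ρ (Ioi 0))
  (hfin : ∀ x > 0, ρ x ≠ ∞)

include hα hK hpos hm hcont hfin

theorem gainDensity_ne_top {s : ℝ} (hs : 0 < s) : gainDensity ν ρ k s ≠ ∞ := by
  obtain ⟨C, hC, hle⟩ := exists_gainDensity_integrand_le hα hK hcont hfin hs
  rw [gainDensity_eq_lintegral_indicator]
  refine ne_top_of_le_ne_top ?_ (lintegral_mono_ae
    (hpos.mono fun y hy => hle s ⟨by linarith, by linarith⟩ y hy))
  rw [lintegral_const_mul' _ _ hC]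
  exact ENNReal.mul_ne_top hC hm.lintegral_lt_top.ne

theorem continuousAt_gainDensity [NullSingletonClass ν]
    (hk : Measurable fun p : ℝ × ℝ => k p.1 p.2) (hρ : Measurable ρ) {s : ℝ} (hs : 0 < s) :
    ContinuousAt (gainDensity ν ρ k) s := by
  obtain ⟨C, hC, hle⟩ := exists_gainDensity_integrand_le hα hK hcont hfin hs
  rw [show gainDensity ν ρ k = _ from funext gainDensity_eq_lintegral_indicator]
  refine tendsto_lintegral_filter_of_dominated_convergence
    (fun y => C * ENNReal.ofReal (1 + y + y ^ (-α))) (Eventually.of_forall fun s => ?_) ?_ ?_ ?_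
  · have : Measurable fun y => k y (s - y) :=
      hk.comp (by fun_prop : Measurable fun y : ℝ => (y, s - y))
    exact Measurable.indicator (by fun_prop) measurableSet_Iio
  · filter_upwards [Ioo_mem_nhds (by linarith : s / 2 < s) (by linarith : s < 2 * s)] with t ht
    exact hpos.mono fun y hy => hle t ht y hy
  · rw [lintegral_const_mul' _ _ hC]
    exact ENNReal.mul_ne_top hC hm.lintegral_lt_top.ne
  · filter_upwards [hpos, compl_mem_ae_iff.2 (measure_singleton (s / 2))] with y hy hys
    exact continuousAt_gainDensity_integrand hK hcont hfin hy hys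

end Gain

section Flux

variable [IsFiniteMeasure ν] (hα : α ∈ Ico (0 : ℝ) 1) (hK : IsNearConstantKernel α ε k)
  (hk : Measurable fun p : ℝ × ℝ => k p.1 p.2) (hpos : ∀ᵐ x ∂ν, 0 < x)
  (hm : Integrable (fun z => 1 + z + z ^ (-α)) ν) (hρ : Measurable ρ)
  (hν : ν = volume.withDensity ρ)

include hα hK hk hpos hm

theorem flux_ne_top (t : ℝ) : flux ν k t ≠ ∞ :=
  ne_top_of_le_ne_top (coagMeasure_setOf_fst_lt_ne_top hα hK hpos hm hk t)
    (measure_mono fun _ hp => hp.1)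

include hρ hν

theorem setLIntegral_lossDensity_ne_top (t : ℝ) : ∫⁻ y in Ioc 0 t, lossDensity ν ρ k y ≠ ∞ :=
  coagMeasure_setOf_fst_lt hρ hν hk hpos t ▸ coagMeasure_setOf_fst_lt_ne_top hα hK hpos hm hk t

theorem setLIntegral_gainDensity_ne_top (t : ℝ) : ∫⁻ s in Ioc 0 t, gainDensity ν ρ k s ≠ ∞ := by
  refine ne_top_of_le_ne_top (coagMeasure_setOf_fst_lt_ne_top hα hK hpos hm hk t) ?_
  rw [← coagMeasure_setOf_add_le hρ hν hK hk hpos, ← flux_add_coagMeasure_setOf_add_le hpos]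
  exact le_add_self

theorem toReal_flux_eq_sub (t : ℝ) : (flux ν k t).toReal =
    (∫⁻ y in Ioc 0 t, lossDensity ν ρ k y).toReal -
      (∫⁻ s in Ioc 0 t, gainDensity ν ρ k s).toReal := by
  rw [← coagMeasure_setOf_fst_lt hρ hν hk hpos, ← flux_add_coagMeasure_setOf_add_le hpos,
    coagMeasure_setOf_add_le hρ hν hK hk hpos,
    ENNReal.toReal_add (flux_ne_top hα hK hk hpos hm t)
      (setLIntegral_gainDensity_ne_top hα hK hk hpos hm hρ hν t), add_sub_cancel_right]

theorem continuousAt_toReal_flux {x : ℝ} (hx : 0 < x) :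
    ContinuousAt (fun t => (flux ν k t).toReal) x := by
  simp only [toReal_flux_eq_sub hα hK hk hpos hm hρ hν]
  exact (continuousAt_toReal_setLIntegral_Ioc (measurable_lossDensity hρ hk)
      (setLIntegral_lossDensity_ne_top hα hK hk hpos hm hρ hν) hx).sub
    (continuousAt_toReal_setLIntegral_Ioc (measurable_gainDensity hρ hk)
      (setLIntegral_gainDensity_ne_top hα hK hk hpos hm hρ hν) hx)

theorem differentiableAt_toReal_flux (hcont : ContinuousOn ρ (Ioi 0)) (hfin : ∀ x > 0, ρ x ≠ ∞)
    {x : ℝ} (hx : 0 < x) : DifferentiableAt ℝ (fun t => (flux ν k t).toReal) x := by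
  have : NullSingletonClass ν := hν ▸ inferInstance
  have hcontx : ContinuousAt ρ x := hcont.continuousAt (Ioi_mem_nhds hx)
  simp only [toReal_flux_eq_sub hα hK hk hpos hm hρ hν]
  refine (differentiableAt_toReal_setLIntegral_Ioc (measurable_lossDensity hρ hk)
      (setLIntegral_lossDensity_ne_top hα hK hk hpos hm hρ hν) hx
      (continuousAt_lossDensity hα hK hpos hm hk hx hcontx (hfin x hx)) ?_).sub
    (differentiableAt_toReal_setLIntegral_Ioc (measurable_gainDensity hρ hk)
      (setLIntegral_gainDensity_ne_top hα hK hk hpos hm hρ hν) hx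
      (continuousAt_gainDensity hα hK hpos hm hcont hfin hk hρ hx)
      (gainDensity_ne_top hα hK hpos hm hcont hfin hx))
  exact ENNReal.mul_ne_top (hfin x hx) (lintegral_ofReal_mul_ne_top hα hK hpos hm hx)

end Flux

theorem continuousOn_fluxDensity (hfin : ∀ x, flux ν k x ≠ ∞)
    (hcont : ∀ x > 0, ContinuousAt (fun t => (flux ν k t).toReal) x) :
    ContinuousOn (fluxDensity ν k) (Ioi 0) := by
  have hquot : ContinuousOn (fun x => (flux ν k x).toReal / x ^ 2) (Ioi 0) :=
    ContinuousOn.div (fun x hx => (hcont x hx).continuousWithinAt) (by fun_prop)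
      fun x (hx : 0 < x) => (pow_pos hx 2).ne'
  refine (ENNReal.continuous_ofReal.comp_continuousOn hquot).congr fun x (hx : 0 < x) => ?_
  rw [fluxDensity, indicator_of_mem (mem_Ioi.2 hx), Function.comp_apply,
    ENNReal.ofReal_div_of_pos (pow_pos hx 2), ENNReal.ofReal_toReal (hfin x)]

theorem IsWeakProfile.differentiableAt_toReal_flux [IsFiniteMeasure ν] (hwk : IsWeakProfile ν k)
    (hα : α ∈ Ico (0 : ℝ) 1) (hK : IsNearConstantKernel α ε k)
    (hk : Measurable fun p : ℝ × ℝ => k p.1 p.2) (hpos : ∀ᵐ x ∂ν, 0 < x)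
    (hm : Integrable (fun z => 1 + z + z ^ (-α)) ν) {x : ℝ} (hx : 0 < x) :
    DifferentiableAt ℝ (fun t => (flux ν k t).toReal) x := by
  have hν := hwk.eq_withDensity_fluxDensity hpos
  have hfin := flux_ne_top hα hK hk hpos hm
  refine Coagulation.differentiableAt_toReal_flux hα hK hk hpos hm measurable_fluxDensity hν
    (continuousOn_fluxDensity hfin fun y hy =>
      continuousAt_toReal_flux hα hK hk hpos hm measurable_fluxDensity hν hy)
    (fun y hy => ?_) hx
  rw [fluxDensity, indicator_of_mem (mem_Ioi.2 hy)]
  exact ENNReal.div_ne_top (hfin y) (ENNReal.ofReal_pos.2 (pow_pos hy 2)).ne'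

end Differentiable

/-! ### Profiles as size distributions -/

/-- The size distribution with number density `φ`, as a measure on `ℝ` carried by `(0, ∞)`. -/
noncomputable def sizeDistribution (φ : ℝ → ℝ) : Measure ℝ :=
  (volume.restrict (Ioi 0)).withDensity fun x => ENNReal.ofReal (φ x)

section IteratedIntegral

variable {ν : Measure ℝ} {k : ℝ → ℝ → ℝ} {α ε : ℝ} [SFinite ν]

theorem flux_eq_setLIntegral (hk : Measurable fun p : ℝ × ℝ => k p.1 p.2)
    (hpos : ∀ᵐ x ∂ν, 0 < x) (t : ℝ) : flux ν k t =
      ∫⁻ y in Ioo 0 t, ∫⁻ z in Ioi (t - y), ENNReal.ofReal (y * k y z) ∂ν ∂ν := by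
  have hs : MeasurableSet {p : ℝ × ℝ | p.1 < t ∧ t < p.1 + p.2} :=
    (measurableSet_lt measurable_fst measurable_const).inter
      (measurableSet_lt measurable_const (measurable_fst.add measurable_snd))
  rw [flux, coagMeasure_apply hk hs, ← lintegral_indicator measurableSet_Ioo]
  refine lintegral_congr_ae (hpos.mono fun y hy => ?_)
  by_cases hyt : y < t
  · have hsection : Prod.mk y ⁻¹' {p : ℝ × ℝ | p.1 < t ∧ t < p.1 + p.2} = Ioi (t - y) := by
      ext z
      simp [hyt, sub_lt_iff_lt_add']
    simp only [hsection, indicator_of_mem (mem_Ioo.2 ⟨hy, hyt⟩)]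
  · simp [hyt]

theorem toReal_flux_eq_integral (hα : α ∈ Ico (0 : ℝ) 1) (hK : IsNearConstantKernel α ε k)
    (hk : Measurable fun p : ℝ × ℝ => k p.1 p.2) (hpos : ∀ᵐ x ∂ν, 0 < x)
    (hint : Integrable (fun x => x) ν) (t : ℝ) : (flux ν k t).toReal =
      ∫ y in Ioo 0 t, ∫ z in Ioi (t - y), y * k y z ∂ν ∂ν := by
  have hmeas : Measurable fun y => ∫⁻ z in Ioi (t - y), ENNReal.ofReal (y * k y z) ∂ν := by
    have hs : MeasurableSet {p : ℝ × ℝ | t - p.1 < p.2} :=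
      measurableSet_lt (by fun_prop) measurable_snd
    have hF : Measurable fun p : ℝ × ℝ => ENNReal.ofReal (p.1 * k p.1 p.2) := by fun_prop
    simp only [← lintegral_indicator measurableSet_Ioi]
    exact (hF.indicator hs).lintegral_prod_right'
  have hfin : ∀ y ∈ Ioo 0 t, ∫⁻ z in Ioi (t - y), ENNReal.ofReal (y * k y z) ∂ν < ∞ := by
    intro y hy
    obtain ⟨C, -, hC⟩ := hK.exists_mul_le_mul hα t (sub_pos.2 hy.2)
    exact (setLIntegral_mono (by fun_prop) fun z hz =>
      ENNReal.ofReal_le_ofReal (hC y ⟨hy.1, hy.2.le⟩ z (le_of_lt hz))).trans_lt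
      (hint.integrableOn.const_mul C).lintegral_lt_top
  rw [flux_eq_setLIntegral hk hpos, ← integral_toReal hmeas.aemeasurable
    ((ae_restrict_mem measurableSet_Ioo).mono hfin)]
  refine setIntegral_congr_fun measurableSet_Ioo fun y hy => ?_
  refine (integral_eq_lintegral_of_nonneg_ae ?_
    (hk.comp measurable_prodMk_left |>.const_mul y).aestronglyMeasurable).symm
  filter_upwards [ae_restrict_of_ae hpos] with z hz
  exact mul_nonneg hy.1.le (hK.nonneg hy.1 hz)

end IteratedIntegral

section Profile

variable {K k : ℝ → ℝ → ℝ} {φ : ℝ → ℝ} {α ε : ℝ}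

instance : SFinite (sizeDistribution φ) :=
  inferInstanceAs (SFinite (Measure.withDensity _ _))

theorem ae_sizeDistribution_pos : ∀ᵐ x ∂sizeDistribution φ, 0 < x :=
  (withDensity_absolutelyContinuous _ _).ae_le (ae_restrict_mem measurableSet_Ioi)

theorem setIntegral_sizeDistribution (hφ : AEMeasurable φ (volume.restrict (Ioi 0)))
    (hφ0 : ∀ᵐ x ∂volume.restrict (Ioi (0 : ℝ)), 0 ≤ φ x) {s : Set ℝ} (hs : MeasurableSet s)
    (hs0 : s ⊆ Ioi 0) (f : ℝ → ℝ) :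
    ∫ x in s, f x ∂sizeDistribution φ = ∫ x in s, φ x * f x := by
  have hrestrict : (volume.restrict (Ioi 0)).restrict s = volume.restrict s := by
    rw [Measure.restrict_restrict hs, inter_eq_left.2 hs0]
  rw [sizeDistribution, setIntegral_withDensity_eq_setIntegral_toReal_smul₀
    (hφ.ennreal_ofReal.mono_measure Measure.restrict_le_self)
    (ae_of_all _ fun x => ENNReal.ofReal_lt_top) _ hs, hrestrict]
  refine integral_congr_ae ((ae_restrict_of_ae_restrict_of_subset hs0 hφ0).mono fun x hx => ?_)
  simp only [ENNReal.toReal_ofReal hx, smul_eq_mul]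

theorem integrable_sizeDistribution (hφ : AEMeasurable φ (volume.restrict (Ioi 0)))
    (hφ0 : ∀ᵐ x ∂volume.restrict (Ioi (0 : ℝ)), 0 ≤ φ x) {f : ℝ → ℝ}
    (hf : IntegrableOn (fun x => f x * φ x) (Ioi 0)) : Integrable f (sizeDistribution φ) := by
  rw [sizeDistribution, integrable_withDensity_iff_integrable_smul₀' hφ.ennreal_ofReal
    (ae_of_all _ fun x => ENNReal.ofReal_lt_top)]
  refine hf.congr (hφ0.mono fun x hx => ?_)
  simp only [ENNReal.toReal_ofReal hx, smul_eq_mul, mul_comm]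

theorem aemeasurable_of_isProfile (hφ : IsProfile k φ) :
    AEMeasurable φ (volume.restrict (Ioi 0)) :=
  hφ.1.aestronglyMeasurable.aemeasurable

section SizeDistribution

variable (hφ : IsProfile k φ) (hα : α ∈ Ico (0 : ℝ) 1) (hK : IsNearConstantKernel α ε k)
  (hk : Measurable fun p : ℝ × ℝ => k p.1 p.2)

include hφ

theorem integrable_id_sizeDistribution : Integrable (fun x => x) (sizeDistribution φ) :=
  integrable_sizeDistribution (aemeasurable_of_isProfile hφ) hφ.2.1 hφ.2.2.1

include hα hK hk

theorem setIntegral_eq_toReal_flux (t : ℝ) :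
    ∫ y in Ioo 0 t, ∫ z in Ioi (t - y), y * k y z * φ y * φ z =
      (flux (sizeDistribution φ) k t).toReal := by
  have hmeas := aemeasurable_of_isProfile hφ
  rw [toReal_flux_eq_integral hα hK hk ae_sizeDistribution_pos (integrable_id_sizeDistribution hφ),
    setIntegral_sizeDistribution hmeas hφ.2.1 measurableSet_Ioo Ioo_subset_Ioi_self]
  refine setIntegral_congr_fun measurableSet_Ioo fun y hy => ?_
  rw [setIntegral_sizeDistribution hmeas hφ.2.1 measurableSet_Ioi
    (Ioi_subset_Ioi (sub_nonneg.2 hy.2.le)), ← integral_const_mul]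
  congr 1 with z
  ring

theorem ae_flux_sizeDistribution_lt_top :
    ∀ᵐ x ∂volume.restrict (Ioi (0 : ℝ)), flux (sizeDistribution φ) k x < ∞ := by
  refine ae_flux_lt_top hα hK hk ae_sizeDistribution_pos (integrable_id_sizeDistribution hφ)
    fun b _ hinf => ?_
  have hzero : ∀ᵐ x ∂volume.restrict (Ioi (0 : ℝ)), x < b → ENNReal.ofReal (φ x) = 0 := by
    filter_upwards [hφ.2.2.2, ae_restrict_mem measurableSet_Ioi] with x hx hx0 hxb
    rw [setIntegral_eq_toReal_flux hφ hα hK hk, hinf x ⟨hx0, hxb⟩, ENNReal.toReal_top] at hx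
    rw [(mul_eq_zero.1 hx).resolve_left (pow_pos hx0 2).ne', ENNReal.ofReal_zero]
  rw [sizeDistribution, withDensity_apply _ measurableSet_Iio, lintegral_eq_zero_iff' (by
    exact (aemeasurable_of_isProfile hφ).ennreal_ofReal.restrict)]
  exact (ae_restrict_iff' measurableSet_Iio).2 hzero

theorem isWeakProfile_sizeDistribution : IsWeakProfile (sizeDistribution φ) k := by
  refine isWeakProfile_of_ae_eq (aemeasurable_of_isProfile hφ).ennreal_ofReal rfl
    ae_sizeDistribution_pos ?_
  filter_upwards [hφ.2.2.2, ae_flux_sizeDistribution_lt_top hφ hα hK hk] with x hx hfin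
  rw [← ENNReal.ofReal_mul (sq_nonneg x), hx, setIntegral_eq_toReal_flux hφ hα hK hk,
    ENNReal.ofReal_toReal hfin.ne]

end SizeDistribution

theorem setIntegral_mul_kernel_congr (hkK : ∀ x y, 0 < x → 0 < y → k x y = K x y) (t : ℝ) :
    ∫ y in Ioo 0 t, ∫ z in Ioi (t - y), y * k y z * φ y * φ z =
      ∫ y in Ioo 0 t, ∫ z in Ioi (t - y), y * K y z * φ y * φ z :=
  setIntegral_congr_fun measurableSet_Ioo fun y hy => setIntegral_congr_fun measurableSet_Ioi
    fun z hz => by rw [hkK y z hy.1 ((sub_pos.2 hy.2).trans hz)]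

theorem exists_forall_differentiableAt_setIntegral (hα : α ∈ Ico (0 : ℝ) 1) :
    ∃ ε > 0, ∀ k, IsNearConstantKernel α ε k → Measurable (fun p : ℝ × ℝ => k p.1 p.2) →
      ∀ φ, IsProfile k φ → ∀ x > 0, DifferentiableAt ℝ
        (fun t => ∫ y in Ioo 0 t, ∫ z in Ioi (t - y), y * k y z * φ y * φ z) x := by
  obtain ⟨ε, hε, hmoment⟩ := exists_forall_integrable_rpow_neg hα
  refine ⟨ε, hε, fun k hK hk φ hφ x hx => ?_⟩
  set ν := sizeDistribution φ
  have hpos : ∀ᵐ x ∂ν, 0 < x := ae_sizeDistribution_pos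
  have hint : Integrable (fun x => x) ν := integrable_id_sizeDistribution hφ
  have hwk : IsWeakProfile ν k := isWeakProfile_sizeDistribution hφ hα hK hk
  have : IsFiniteMeasure ν :=
    ⟨(hwk.measure_univ_le_one hK hk hpos hint).trans_lt ENNReal.one_lt_top⟩
  simp only [setIntegral_eq_toReal_flux hφ hα hK hk]
  exact hwk.differentiableAt_toReal_flux hα hK hk hpos
    (((integrable_const 1).add hint).add (hmoment k ν hK hk hwk hpos hint)) hx

end Profile

end Coagulation

theorem stmt19_general (α : ℝ) (hα : α ∈ Ico (0 : ℝ) 1) :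
    ∃ εstar > (0 : ℝ), ∀ K : ℝ → ℝ → ℝ, Coagulation.IsNearConstantKernel α εstar K →
      ∀ φ : ℝ → ℝ, IsProfile K φ →
        (∀ x : ℝ, 0 < x → DifferentiableAt ℝ
          (fun t => (1 / t ^ 2) *
            ∫ y in Ioo 0 t, ∫ z in Ioi (t - y), y * K y z * φ y * φ z) x) ∧
        (∀ᵐ x ∂(volume.restrict (Ioi (0 : ℝ))),
          (1 / x ^ 2) * (∫ y in Ioo 0 x, ∫ z in Ioi (x - y), y * K y z * φ y * φ z) = φ x) := by
  obtain ⟨ε, hε, hdiff⟩ := Coagulation.exists_forall_differentiableAt_setIntegral hα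
  refine ⟨ε, hε, fun K hK φ hφ => ⟨fun x hx => ?_, ?_⟩⟩
  · obtain ⟨k, hk, hK', hkK⟩ := hK.exists_measurable
    have hcongr := Coagulation.setIntegral_mul_kernel_congr (φ := φ) hkK
    have hφ' : IsProfile k φ := ⟨hφ.1, hφ.2.1, hφ.2.2.1, by simpa only [hcongr] using hφ.2.2.2⟩
    simp only [← hcongr]
    have hsq : DifferentiableAt ℝ (fun t : ℝ => 1 / t ^ 2) x := by
      fun_prop (disch := exact (pow_pos hx 2).ne')
    exact hsq.mul (hdiff k hK' hk φ hφ' x hx)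
  · filter_upwards [hφ.2.2.2, ae_restrict_mem measurableSet_Ioi] with x hx hx0
    rw [← hx, one_div, inv_mul_cancel_left₀ (pow_pos hx0 2).ne']

theorem stmt19 (α : ℝ) (hα : α ∈ Ioo (0:ℝ) 1) (W : ℝ → ℝ → ℝ) (hW : GoodW α W) :
    ∃ εstar > (0:ℝ), ∀ ε : ℝ, 0 < ε → ε ≤ εstar →
      ∀ φ : ℝ → ℝ, IsProfile (Kern ε W) φ → IsNormalised φ →
        (∀ x : ℝ, 0 < x → DifferentiableAt ℝ
          (fun t => (1 / t ^ 2) *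
            ∫ y in Ioo 0 t, ∫ z in Ioi (t - y), y * Kern ε W y z * φ y * φ z) x) ∧
        (∀ᵐ x ∂(volume.restrict (Ioi (0:ℝ))),
          (1 / x ^ 2) *
            (∫ y in Ioo 0 x, ∫ z in Ioi (x - y), y * Kern ε W y z * φ y * φ z) = φ x) := by
  obtain ⟨εstar, hεstar, h⟩ := stmt19_general α (Ioo_subset_Ico_self hα)
  exact ⟨εstar, hεstar, fun ε hε hle φ hφ _ =>
    h _ (Coagulation.isNearConstantKernel_kern hW hε.le hle) φ hφ⟩
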